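/- arXiv:1708.05343 — 2 statements merged into one kernel-verified Lean document; each statement's English description precedes it below -/
import Mathlib

section
/- If the function V(m) belongs to the class 𝒱 and c ≥ 1 is a real number, then the function m ↦ V(m/c) also belongs to 𝒱. -/
open MeasureTheory Filter

noncomputable section

/-- The Cauchy–Stieltjes kernel density `f(x,m) = V(m)/(V(m)+m(m-x))`. -/
def cskKernel (V : ℝ → ℝ) (m x : ℝ) : ℝ := V m / (V m + m * (m - x))

/-- `ν` is a non-degenerate, compactly supported probability measure on `ℝ` with mean `0`. -/
def IsCSKGenerator (ν : Measure ℝ) : Prop :=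
  IsProbabilityMeasure ν ∧
  (∃ R : ℝ, ν (Set.Icc (-R) R)ᶜ = 0) ∧
  (∀ a : ℝ, ν ≠ Measure.dirac a) ∧
  (∫ x, x ∂ν) = 0

/-- `V` is the variance function of the CSK family generated by `ν`:
`V` is real-analytic near `0`, `V 0 > 0`, and for all `m` near `0` the kernel
`f(x,m)` is a.e. nonnegative, integrates to `1`, and has mean `m`. -/
def IsCSKVarianceFun (ν : Measure ℝ) (V : ℝ → ℝ) : Prop :=
  AnalyticAt ℝ V 0 ∧ 0 < V 0 ∧
  ∃ ε > 0, ∀ m : ℝ, |m| < ε →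
    (∀ᵐ x ∂ν, 0 ≤ cskKernel V m x) ∧
    (∫ x, cskKernel V m x ∂ν) = 1 ∧
    (∫ x, x * cskKernel V m x ∂ν) = m

/-- The class `𝒱` of variance functions of CSK families generated by
non-degenerate compactly supported probability measures with mean `0` and variance `1`. -/
def memV (V : ℝ → ℝ) : Prop :=
  ∃ ν : Measure ℝ, IsCSKGenerator ν ∧ (∫ x, x ^ 2 ∂ν) = 1 ∧ IsCSKVarianceFun ν V

/-- The class `𝒱∞`: those `V` such that `m ↦ V (c * m)` is in `𝒱` for every real `c`. -/
def memVinf (V : ℝ → ℝ) : Prop := ∀ c : ℝ, memV (fun m => V (c * m))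

/-!
A function `V` lies in `𝒱` if and only if it has an operator model: a self-adjoint operator `T` and
a unit vector `Ω` such that, for small `m`, the kernel `f(·, m)` is represented by a vector
`ψ = f(T, m) Ω` with `⟪Ω, ψ⟫ = 1`. For a measure `ν`, multiplication by `x` on `L²(ν)` and the
constant function `1` form such a model; conversely, the spectral measure of `T` at `Ω` generates
the family.

If `V` is the variance function of `ν`, then `m ↦ V (m / c)` is the one of the dilation by `c⁻¹` of
the free convolution power `ν^{⊞ c²}`. This power is realized on the full Fock space over the model
space, as the sum of a preservation operator and weighted creation and annihilation operators. If
`f` is the kernel vector of the given model at `m / c` and `u = f - Ω`, the new kernel vector at `m`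
is `vacuum + c • (u ⊗ φ)`, where `φ` is the geometric series solving `φ = vacuum + t • (u ⊗ φ)` with
`t = √(c² - 1)`; it converges because `u` is small for small `m`.
-/

open InnerProductSpace
open scoped CompactlySupported ENNReal Topology

section Kernel

variable {V : ℝ → ℝ} {m x : ℝ} {K : Set ℝ} {ν : Measure ℝ}

lemma mul_cskKernel (h : V m + m * (m - x) ≠ 0) :
    (V m + m * (m - x)) * cskKernel V m x = V m :=
  mul_div_cancel₀ _ h

lemma cskKernel_zero_left (hV : V 0 ≠ 0) (x : ℝ) : cskKernel V 0 x = 1 := by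
  simp [cskKernel, hV]

lemma continuousOn_cskKernel (h : ∀ x ∈ K, V m + m * (m - x) ≠ 0) :
    ContinuousOn (cskKernel V m) K :=
  ContinuousOn.div (by fun_prop) (by fun_prop) h

lemma measurable_cskKernel : Measurable (cskKernel V m) := by
  unfold cskKernel
  fun_prop

lemma eventually_forall_mem_cskKernel_denom_pos (hV : ContinuousAt V 0) (hV0 : 0 < V 0)
    (hK : IsCompact K) : ∀ᶠ m in 𝓝 0, ∀ x ∈ K, 0 < V m + m * (m - x) := by
  refine hK.eventually_forall_of_forall_eventually fun x _ ↦ ?_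
  have hVfst : ContinuousAt (fun z : ℝ × ℝ ↦ V z.1) (0, x) :=
    ContinuousAt.comp (x := (0, x)) hV continuousAt_fst
  have hdenom : ContinuousAt (fun z : ℝ × ℝ ↦ V z.1 + z.1 * (z.1 - z.2)) (0, x) :=
    hVfst.add (by fun_prop)
  exact hdenom.eventually (lt_mem_nhds (by simpa using hV0))

lemma memLp_ofReal_of_continuousOn [IsFiniteMeasure ν] {f : ℝ → ℝ} (hK : IsCompact K)
    (hνK : ∀ᵐ x ∂ν, x ∈ K) (hf : Measurable f) (hfK : ContinuousOn f K) (p : ℝ≥0∞) :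
    MemLp (fun x ↦ (f x : ℂ)) p ν := by
  obtain ⟨C, hC⟩ := hK.exists_bound_of_continuousOn hfK
  refine MemLp.of_bound (by fun_prop) C ?_
  filter_upwards [hνK] with x hx
  simpa using hC x hx

lemma integral_mul_cskKernel_eq [IsProbabilityMeasure ν] (hm : m ≠ 0)
    (hdenom : ∀ᵐ x ∂ν, V m + m * (m - x) ≠ 0) (hint : ∫ x, cskKernel V m x ∂ν = 1) :
    ∫ x, x * cskKernel V m x ∂ν = m := by
  have hintegrable : Integrable (cskKernel V m) ν :=
    .of_integral_ne_zero (by rw [hint]; exact one_ne_zero)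
  have hpointwise : ∀ᵐ x ∂ν, x * cskKernel V m x =
      m⁻¹ * ((V m + m ^ 2) * cskKernel V m x - V m) := by
    filter_upwards [hdenom] with x hx
    field_simp
    linear_combination -mul_cskKernel hx
  calc ∫ x, x * cskKernel V m x ∂ν
      = ∫ x, m⁻¹ * ((V m + m ^ 2) * cskKernel V m x - V m) ∂ν := integral_congr_ae hpointwise
    _ = m⁻¹ * ((V m + m ^ 2) * 1 - V m) := by
      rw [integral_const_mul, integral_sub (hintegrable.const_mul _) (integrable_const _),
        integral_const_mul, hint]
      simp
    _ = m := by field_simp; ring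

lemma isCSKVarianceFun_of_eventually_integral_eq_one [IsProbabilityMeasure ν] (hK : IsCompact K)
    (hνK : ∀ᵐ x ∂ν, x ∈ K) (hmean : ∫ x, x ∂ν = 0) (hV : AnalyticAt ℝ V 0) (hV0 : 0 < V 0)
    (hint : ∀ᶠ m in 𝓝 0, ∫ x, cskKernel V m x ∂ν = 1) : IsCSKVarianceFun ν V := by
  have hdenom := eventually_forall_mem_cskKernel_denom_pos hV.continuousAt hV0 hK
  have hpos : ∀ᶠ m in 𝓝 0, 0 < V m := hV.continuousAt.eventually (lt_mem_nhds hV0)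
  obtain ⟨ε, hε, hball⟩ := Metric.eventually_nhds_iff.1 (hint.and (hdenom.and hpos))
  refine ⟨hV, hV0, ε, hε, fun m hm ↦ ?_⟩
  obtain ⟨hint_m, hdenom_m, hpos_m⟩ := hball (by simpa using hm)
  refine ⟨?_, hint_m, ?_⟩
  · filter_upwards [hνK] with x hx
    exact (div_pos hpos_m (hdenom_m x hx)).le
  · rcases eq_or_ne m 0 with rfl | hm0
    · simpa only [cskKernel_zero_left hV0.ne', mul_one] using hmean
    · exact integral_mul_cskKernel_eq hm0 (hνK.mono fun x hx ↦ (hdenom_m x hx).ne') hint_m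

lemma isCSKGenerator_of_integral_sq_eq_one [IsProbabilityMeasure ν] (hK : IsCompact K)
    (hνK : ∀ᵐ x ∂ν, x ∈ K) (hmean : ∫ x, x ∂ν = 0) (hvar : ∫ x, x ^ 2 ∂ν = 1) :
    IsCSKGenerator ν := by
  refine ⟨inferInstance, ?_, ?_, hmean⟩
  · obtain ⟨R, hR⟩ := hK.isBounded.exists_norm_le
    exact ⟨R, measure_mono_null (Set.compl_subset_compl.2 fun x hx ↦ abs_le.1 (hR x hx)) hνK⟩
  · rintro a rfl
    simp only [integral_dirac] at hmean hvar
    simp [hmean] at hvar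

end Kernel

section SpectralMeasure

lemma exists_measure_forall_integral_eq {X : Type*} [TopologicalSpace X] [CompactSpace X]
    [T2Space X] [MeasurableSpace X] [BorelSpace X] (Λ : C(X, ℝ) →ₚ[ℝ] ℝ) :
    ∃ μ : Measure X, ∀ f : C(X, ℝ), ∫ x, f x ∂μ = Λ f := by
  let Λc : C_c(X, ℝ) →ₚ[ℝ] ℝ := .mk₀
    { toFun f := Λ f.toContinuousMap
      map_add' f g := map_add Λ _ _
      map_smul' r f := map_smul Λ r _ }
    fun f hf ↦ map_nonneg Λ hf
  exact ⟨RealRMK.rieszMeasure Λc, fun f ↦ RealRMK.integral_rieszMeasure Λc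
    (CompactlySupportedContinuousMap.continuousMapEquiv f)⟩

variable {H : Type*} [NormedAddCommGroup H] [InnerProductSpace ℂ H] [CompleteSpace H]

/-- The vector functional `f ↦ ⟪Ω, f(T) Ω⟫` of a self-adjoint operator `T`. Its values are real, and
we take real parts to land in `ℝ`. -/
def vectorFunctional {T : H →L[ℂ] H} (hT : IsSelfAdjoint T) (Ω : H) :
    C(spectrum ℝ T, ℝ) →ₚ[ℝ] ℝ :=
  .mk₀
    { toFun f := (inner ℂ Ω (cfcHom hT f Ω)).re
      map_add' f g := by simp
      map_smul' r f := by
        rw [map_smul, smul_apply, ← Complex.coe_smul, inner_smul_right]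
        simp }
    fun f hf ↦ ((ContinuousLinearMap.nonneg_iff_isPositive _).1
      ((cfcHom_nonneg_iff hT).2 hf)).re_inner_nonneg_right Ω

lemma exists_spectralMeasure {T : H →L[ℂ] H} (hT : IsSelfAdjoint T) {Ω : H} (hΩ : ‖Ω‖ = 1) :
    ∃ μ : Measure ℝ, IsProbabilityMeasure μ ∧ (∀ᵐ x ∂μ, x ∈ spectrum ℝ T) ∧
      ∀ f : ℝ → ℝ, ContinuousOn f (spectrum ℝ T) →
        ∫ x, f x ∂μ = (inner ℂ Ω (cfc f T Ω)).re := by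
  have : CompactSpace (spectrum ℝ T) := inferInstance
  obtain ⟨μ, hμ⟩ := exists_measure_forall_integral_eq (vectorFunctional hT Ω)
  have hval : MeasurableEmbedding (Subtype.val : spectrum ℝ T → ℝ) :=
    .subtype_coe (spectrum.isClosed T).measurableSet
  have hintegral (f : ℝ → ℝ) (hf : ContinuousOn f (spectrum ℝ T)) :
      ∫ x, f x ∂(μ.map Subtype.val) = (inner ℂ Ω (cfc f T Ω)).re := by
    rw [hval.integral_map, cfc_apply f T hT hf]
    exact hμ ⟨_, hf.domRestrict⟩
  refine ⟨μ.map Subtype.val, ?_, ?_, hintegral⟩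
  · have hone := hintegral (fun _ ↦ 1) continuousOn_const
    rw [cfc_const_one ℝ T, one_apply_eq_self, inner_self_eq_norm_sq_to_K, hΩ] at hone
    rw [isProbabilityMeasure_iff_real]
    simpa using hone
  · exact (hval.ae_map_iff).2 (ae_of_all _ Subtype.property)

end SpectralMeasure

/-- `ψ` is the vector `f(T, m) Ω`, where `f` is the kernel with value `v` of the variance function
at `m`, and `⟪Ω, ψ⟫ = 1` expresses that this kernel integrates to `1` in the state `Ω`. The
resolvent is cleared, so that no spectral condition on `T` is needed. -/
structure IsKernelVector {𝕜 H : Type*} [RCLike 𝕜] [NormedAddCommGroup H] [InnerProductSpace 𝕜 H]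
    (T : H →L[𝕜] H) (Ω : H) (v m : 𝕜) (ψ : H) : Prop where
  inner_eq_one : inner 𝕜 Ω ψ = 1
  smul_add_smul_eq : v • ψ + m • (m • ψ - T ψ) = v • Ω

namespace IsKernelVector

variable {𝕜 H : Type*} [RCLike 𝕜] [NormedAddCommGroup H] [InnerProductSpace 𝕜 H]
  {T : H →L[𝕜] H} {Ω ψ : H} {v m : 𝕜}

lemma smul_apply_eq (h : IsKernelVector T Ω v m ψ) :
    m • T ψ = (v + m ^ 2) • (ψ - Ω) + m ^ 2 • Ω := by
  linear_combination (norm := module) -h.smul_add_smul_eq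

lemma mul_inner_apply (h : IsKernelVector T Ω v m ψ) (hΩ : ‖Ω‖ = 1) :
    m * inner 𝕜 Ω (T ψ) = m ^ 2 := by
  rw [← inner_smul_right, h.smul_apply_eq]
  simp [inner_add_right, inner_sub_right, inner_smul_right, h.inner_eq_one, hΩ]

lemma norm_mul_norm_sub_le (h : IsKernelVector T Ω v m ψ) :
    ‖v + m ^ 2‖ * ‖ψ - Ω‖ ≤ ‖m‖ * (‖T‖ * ‖ψ - Ω‖ + ‖T Ω - m • Ω‖) := by
  have hsub : (v + m ^ 2) • (ψ - Ω) = m • (T (ψ - Ω) + (T Ω - m • Ω)) := by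
    rw [map_sub]
    linear_combination (norm := module) -h.smul_apply_eq
  calc ‖v + m ^ 2‖ * ‖ψ - Ω‖ = ‖m‖ * ‖T (ψ - Ω) + (T Ω - m • Ω)‖ := by
        rw [← norm_smul, hsub, norm_smul]
    _ ≤ ‖m‖ * (‖T‖ * ‖ψ - Ω‖ + ‖T Ω - m • Ω‖) := by
        gcongr
        exact (norm_add_le _ _).trans (by gcongr; exact T.le_opNorm _)

end IsKernelVector

/-- An operator model of `V`: the self-adjoint operator `T` has mean `0` and variance `1` in the
vector state of `Ω`, and `V` is the variance function of the CSK family generated by its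
distribution in that state. -/
structure IsCSKModel {H : Type*} [NormedAddCommGroup H] [InnerProductSpace ℂ H] [CompleteSpace H]
    (T : H →L[ℂ] H) (Ω : H) (V : ℝ → ℝ) : Prop where
  isSelfAdjoint : IsSelfAdjoint T
  norm_eq_one : ‖Ω‖ = 1
  inner_apply_eq_zero : inner ℂ Ω (T Ω) = 0
  norm_apply_eq_one : ‖T Ω‖ = 1
  analyticAt : AnalyticAt ℝ V 0
  pos : 0 < V 0
  eventually_exists : ∀ᶠ m : ℝ in 𝓝 0, ∃ ψ, IsKernelVector T Ω (V m : ℂ) (m : ℂ) ψ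

section SpectralDistribution

variable {H : Type*} [NormedAddCommGroup H] [InnerProductSpace ℂ H] [CompleteSpace H]
  {T : H →L[ℂ] H} {Ω ψ : H} {V : ℝ → ℝ} {m : ℝ}

lemma IsKernelVector.cfc_cskKernel_apply (hψ : IsKernelVector T Ω (V m : ℂ) (m : ℂ) ψ)
    (hT : IsSelfAdjoint T) (hVm : V m ≠ 0)
    (hdenom : ∀ x ∈ spectrum ℝ T, V m + m * (m - x) ≠ 0) : cfc (cskKernel V m) T Ω = ψ := by
  have hmul : cfc (cskKernel V m) T * cfc (fun x ↦ V m + m * (m - x)) T =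
      algebraMap ℝ (H →L[ℂ] H) (V m) := by
    rw [← cfc_mul _ _ T (continuousOn_cskKernel hdenom) (by fun_prop), ← cfc_const (V m) T]
    exact cfc_congr fun x hx ↦ (mul_comm _ _).trans (mul_cskKernel (hdenom x hx))
  have hcfc : cfc (fun x ↦ V m + m * (m - x)) T =
      algebraMap ℝ (H →L[ℂ] H) (V m) + m • (algebraMap ℝ (H →L[ℂ] H) m - T) := by
    rw [cfc_const_add _ _ T, cfc_const_mul _ _ T, cfc_sub _ _ T, cfc_const m T, cfc_id' ℝ T]
  have hdenomψ : cfc (fun x ↦ V m + m * (m - x)) T ψ = V m • Ω := by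
    rw [hcfc]
    simpa [Algebra.algebraMap_eq_smul_one, ← Complex.coe_smul] using hψ.smul_add_smul_eq
  have happly : V m • cfc (cskKernel V m) T Ω = V m • ψ := by
    rw [← ContinuousLinearMap.map_smul_of_tower, ← hdenomψ, ← mul_apply_eq_comp, hmul,
      Algebra.algebraMap_eq_smul_one, smul_apply, one_apply_eq_self]
  exact smul_right_injective H hVm happly

theorem IsCSKModel.memV (h : IsCSKModel T Ω V) : memV V := by
  obtain ⟨μ, hμ, hspectrum, hintegral⟩ := exists_spectralMeasure h.isSelfAdjoint h.norm_eq_one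
  have hT := h.isSelfAdjoint
  have hcompact : IsCompact (spectrum ℝ T) := spectrum.isCompact T
  have hmean : ∫ x, x ∂μ = 0 := by
    rw [hintegral (fun x ↦ x) (by fun_prop), cfc_id' ℝ T, h.inner_apply_eq_zero, Complex.zero_re]
  have hvar : ∫ x, x ^ 2 ∂μ = 1 := by
    have hsymm : inner ℂ Ω (T (T Ω)) = inner ℂ (T Ω) (T Ω) :=
      (ContinuousLinearMap.isSelfAdjoint_iff_isSymmetric.1 hT Ω (T Ω)).symm
    rw [hintegral (fun x ↦ x ^ 2) (by fun_prop), cfc_pow_id T 2, sq, mul_apply_eq_comp, hsymm]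
    simp [h.norm_apply_eq_one]
  refine ⟨μ, isCSKGenerator_of_integral_sq_eq_one hcompact hspectrum hmean hvar, hvar,
    isCSKVarianceFun_of_eventually_integral_eq_one hcompact hspectrum hmean h.analyticAt h.pos ?_⟩
  have hcont := h.analyticAt.continuousAt
  filter_upwards [h.eventually_exists, hcont.eventually (lt_mem_nhds h.pos),
    eventually_forall_mem_cskKernel_denom_pos hcont h.pos hcompact]
    with m ⟨ψ, hψ⟩ hVm hdenom
  have hdenom_ne : ∀ x ∈ spectrum ℝ T, V m + m * (m - x) ≠ 0 := fun x hx ↦ (hdenom x hx).ne'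
  rw [hintegral _ (continuousOn_cskKernel hdenom_ne),
    hψ.cfc_cskKernel_apply h.isSelfAdjoint hVm.ne' hdenom_ne, hψ.inner_eq_one, Complex.one_re]

lemma IsCSKModel.eventually_exists_norm_sub_lt (h : IsCSKModel T Ω V) {δ : ℝ} (hδ : 0 < δ) :
    ∀ᶠ m : ℝ in 𝓝 0, ∃ ψ, IsKernelVector T Ω (V m : ℂ) (m : ℂ) ψ ∧ ‖ψ - Ω‖ < δ := by
  have hcont := h.analyticAt.continuousAt
  have hgap : ContinuousAt (fun m : ℝ ↦
      δ * (|V m + m ^ 2| - |m| * ‖T‖) - |m| * ‖T Ω - (m : ℂ) • Ω‖) 0 := by fun_prop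
  have hcoeff : ContinuousAt (fun m : ℝ ↦ |V m + m ^ 2| - |m| * ‖T‖) 0 := by fun_prop
  filter_upwards [h.eventually_exists,
    hgap.eventually (lt_mem_nhds (a := 0) (by simpa using mul_pos hδ (abs_pos.2 h.pos.ne'))),
    hcoeff.eventually (lt_mem_nhds (a := 0) (by simpa using h.pos.ne'))]
    with m ⟨ψ, hψ⟩ hgap_m hcoeff_m
  refine ⟨ψ, hψ, lt_of_mul_lt_mul_right ?_ hcoeff_m.le⟩
  have hle := hψ.norm_mul_norm_sub_le
  have hnorm : ‖(V m : ℂ) + (m : ℂ) ^ 2‖ = |V m + m ^ 2| := by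
    rw [← Real.norm_eq_abs, ← Complex.norm_real]
    push_cast
    rfl
  rw [hnorm, Complex.norm_real, Real.norm_eq_abs] at hle
  linarith

end SpectralDistribution

section Multiplication

variable {𝕜 : Type*} [RCLike 𝕜] {α : Type*} {mα : MeasurableSpace α} {ν : Measure α}

lemma inner_eq_integral_mul_of_ae_eq_ofReal {F G : Lp 𝕜 2 ν} {f g : α → ℝ}
    (hF : F =ᵐ[ν] fun x ↦ (f x : 𝕜)) (hG : G =ᵐ[ν] fun x ↦ (g x : 𝕜)) :
    inner 𝕜 F G = ((∫ x, f x * g x ∂ν : ℝ) : 𝕜) := by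
  rw [L2.inner_def, ← integral_ofReal]
  refine integral_congr_ae ?_
  filter_upwards [hF, hG] with x hFx hGx
  rw [hFx, hGx]
  simp [mul_comm]

lemma coeFn_const_one [IsFiniteMeasure ν] :
    Lp.const 2 ν (1 : 𝕜) =ᵐ[ν] fun _ ↦ ((1 : ℝ) : 𝕜) := by
  filter_upwards [Lp.coeFn_const 2 ν (1 : 𝕜)] with x hx
  rw [hx, Function.const_apply, RCLike.ofReal_one]

/-- The operator on `L²(ν)` of multiplication by an essentially bounded function. -/
def mulOperator (g : Lp 𝕜 ∞ ν) : Lp 𝕜 2 ν →L[𝕜] Lp 𝕜 2 ν :=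
  (ContinuousLinearMap.mul 𝕜 𝕜).holderL ν ∞ 2 2 g

lemma coeFn_mulOperator (g : Lp 𝕜 ∞ ν) (f : Lp 𝕜 2 ν) :
    mulOperator g f =ᵐ[ν] fun x ↦ g x * f x :=
  (ContinuousLinearMap.mul 𝕜 𝕜).coeFn_holder g f

lemma isSelfAdjoint_mulOperator {g : Lp 𝕜 ∞ ν} (hg : ∀ᵐ x ∂ν, IsSelfAdjoint (g x)) :
    IsSelfAdjoint (mulOperator g) := by
  rw [ContinuousLinearMap.isSelfAdjoint_iff', eq_comm, ContinuousLinearMap.eq_adjoint_iff]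
  intro f h
  rw [L2.inner_def, L2.inner_def]
  refine integral_congr_ae ?_
  filter_upwards [coeFn_mulOperator g f, coeFn_mulOperator g h, hg] with x hf hh hgx
  have hstar : starRingEnd 𝕜 (g x) = g x := hgx
  rw [hf, hh, RCLike.inner_apply, RCLike.inner_apply, map_mul, hstar]
  ring

end Multiplication

section CSKModelOfMeasure

variable {ν : Measure ℝ} [IsProbabilityMeasure ν] {V : ℝ → ℝ} {K : Set ℝ} {m : ℝ}

lemma isKernelVector_toLp_cskKernel {g : Lp ℂ ∞ ν} (hg : g =ᵐ[ν] fun x ↦ (x : ℂ))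
    (hdenom : ∀ᵐ x ∂ν, V m + m * (m - x) ≠ 0) (hint : ∫ x, cskKernel V m x ∂ν = 1)
    (hmem : MemLp (fun x ↦ (cskKernel V m x : ℂ)) 2 ν) :
    IsKernelVector (mulOperator g) (Lp.const 2 ν 1) (V m : ℂ) (m : ℂ) hmem.toLp where
  inner_eq_one := by
    rw [inner_eq_integral_mul_of_ae_eq_ofReal (g := cskKernel V m) coeFn_const_one
      hmem.coeFn_toLp]
    simp only [one_mul, hint, RCLike.ofReal_one]
  smul_add_smul_eq := by
    set ψ : Lp ℂ 2 ν := hmem.toLp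
    refine Lp.ext ?_
    filter_upwards [hmem.coeFn_toLp, hg, hdenom, coeFn_mulOperator g ψ,
      Lp.coeFn_const 2 ν (1 : ℂ), Lp.coeFn_smul (V m : ℂ) (Lp.const 2 ν (1 : ℂ)),
      Lp.coeFn_add ((V m : ℂ) • ψ) ((m : ℂ) • ((m : ℂ) • ψ - mulOperator g ψ)),
      Lp.coeFn_smul (V m : ℂ) ψ, Lp.coeFn_smul (m : ℂ) ((m : ℂ) • ψ - mulOperator g ψ),
      Lp.coeFn_sub ((m : ℂ) • ψ) (mulOperator g ψ), Lp.coeFn_smul (m : ℂ) ψ]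
      with x hψ hgx hx hmul hconst hright hadd hv hm hsub hm'
    have hkernel : ((V m + m * (m - x) : ℝ) : ℂ) * cskKernel V m x = V m := by
      exact_mod_cast mul_cskKernel hx
    push_cast at hkernel
    simp only [hright, hadd, hv, hm, hsub, hm', hmul, hgx, hconst, Pi.add_apply, Pi.smul_apply,
      Pi.sub_apply, Function.const_apply, smul_eq_mul]
    rw [hψ]
    linear_combination hkernel

theorem exists_isCSKModel_mulOperator (hK : IsCompact K) (hνK : ∀ᵐ x ∂ν, x ∈ K)
    (hmean : ∫ x, x ∂ν = 0) (hvar : ∫ x, x ^ 2 ∂ν = 1) (hV : IsCSKVarianceFun ν V) :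
    ∃ g : Lp ℂ ∞ ν, IsCSKModel (mulOperator g) (Lp.const 2 ν 1) V := by
  obtain ⟨hanalytic, hV0, ε, hε, hkernel⟩ := hV
  obtain ⟨g, hg⟩ : ∃ g : Lp ℂ ∞ ν, g =ᵐ[ν] fun x ↦ (x : ℂ) :=
    ⟨_, (memLp_ofReal_of_continuousOn hK hνK measurable_id continuousOn_id ∞).coeFn_toLp⟩
  have hmul_one : mulOperator g (Lp.const 2 ν 1) =ᵐ[ν] fun x ↦ (x : ℂ) := by
    filter_upwards [coeFn_mulOperator g (Lp.const 2 ν 1), hg,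
      coeFn_const_one (𝕜 := ℂ) (ν := ν)] with x hmul hgx hone
    rw [hmul, hgx, hone, RCLike.ofReal_one, mul_one]
  refine ⟨g, ?_, ?_, ?_, ?_, hanalytic, hV0, ?_⟩
  · refine isSelfAdjoint_mulOperator (hg.mono fun x hx ↦ ?_)
    rw [hx]
    exact Complex.conj_ofReal x
  · simp [Lp.norm_const]
  · rw [inner_eq_integral_mul_of_ae_eq_ofReal (g := fun x ↦ x) coeFn_const_one hmul_one]
    simp only [one_mul, hmean, RCLike.ofReal_zero]
  · rw [← pow_eq_one_iff_of_nonneg (norm_nonneg _) two_ne_zero,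
      ← inner_self_eq_norm_sq (𝕜 := ℂ),
      inner_eq_integral_mul_of_ae_eq_ofReal (f := fun x ↦ x) (g := fun x ↦ x) hmul_one hmul_one]
    simp only [← sq, hvar, RCLike.ofReal_one, RCLike.one_re]
  · filter_upwards [Metric.ball_mem_nhds (0 : ℝ) hε,
      eventually_forall_mem_cskKernel_denom_pos hanalytic.continuousAt hV0 hK] with m hm hdenom
    have hdenom_ne : ∀ x ∈ K, V m + m * (m - x) ≠ 0 := fun x hx ↦ (hdenom x hx).ne'
    exact ⟨_, isKernelVector_toLp_cskKernel hg (hνK.mono hdenom_ne)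
      (hkernel m (by simpa using hm)).2.1 (memLp_ofReal_of_continuousOn hK hνK
        measurable_cskKernel (continuousOn_cskKernel hdenom_ne) 2)⟩

end CSKModelOfMeasure

section FockSpace

variable {𝕜 : Type*} [RCLike 𝕜]

lemma inner_linearIsometry_eq_zero {ι E : Type*} {G : ι → Type*} [NormedAddCommGroup E]
    [InnerProductSpace 𝕜 E] [CompleteSpace E] [∀ i, NormedAddCommGroup (G i)]
    [∀ i, InnerProductSpace 𝕜 (G i)] {W : ∀ i, G i →ₗᵢ[𝕜] E} (hW : OrthogonalFamily 𝕜 G W)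
    {x : E} {f : lp G 2} (hx : ∀ i, inner 𝕜 x (W i (f i)) = 0) :
    inner 𝕜 x (hW.linearIsometry f) = 0 := by
  have hsum := (hW.hasSum_linearIsometry f).mapL (innerSL 𝕜 x)
  simp only [innerSL_apply_apply, hx] at hsum
  exact hsum.unique hasSum_zero

section Ampliation

variable {S E F : Type*} [NormedAddCommGroup E] [InnerProductSpace 𝕜 E]
  [NormedAddCommGroup F] [InnerProductSpace 𝕜 F]

/-- The operator on `ℓ²`-families that applies `T` to every entry, that is, `1 ⊗ T`. -/
def ampliation (S : Type*) (T : E →L[𝕜] F) : lp (fun _ : S ↦ E) 2 →L[𝕜] lp (fun _ : S ↦ F) 2 :=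
  lp.mapCLM 2 (fun _ ↦ T) (norm_nonneg T) fun _ ↦ le_rfl

lemma ampliation_apply (T : E →L[𝕜] F) (f : lp (fun _ : S ↦ E) 2) (i : S) :
    ampliation S T f i = T (f i) :=
  rfl

lemma adjoint_ampliation [CompleteSpace E] [CompleteSpace F] (T : E →L[𝕜] F) :
    (ampliation S T).adjoint = ampliation S T.adjoint := by
  rw [eq_comm, ContinuousLinearMap.eq_adjoint_iff]
  intro f g
  rw [lp.inner_eq_tsum, lp.inner_eq_tsum]
  refine tsum_congr fun i ↦ ?_
  rw [ampliation_apply, ampliation_apply, ContinuousLinearMap.adjoint_inner_left]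

end Ampliation

/-- The full Fock space over a Hilbert space with an orthonormal basis indexed by `ι`, given by its
coordinates with respect to the words in the basis vectors. -/
abbrev FullFockSpace (𝕜 ι : Type*) [RCLike 𝕜] : Type _ := lp (fun _ : List ι ↦ 𝕜) 2

namespace FullFockSpace

variable {ι : Type*}

open scoped Classical in
/-- The basis vector of the full Fock space given by a word. -/
def word (l : List ι) : FullFockSpace 𝕜 ι := lp.single 2 l 1

/-- The vacuum vector of the full Fock space. -/
abbrev vacuum : FullFockSpace 𝕜 ι := word []

lemma orthonormal_word : Orthonormal 𝕜 (word : List ι → FullFockSpace 𝕜 ι) := by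
  classical
  rw [orthonormal_iff_ite]
  intro l l'
  rw [word, lp.inner_single_left]
  by_cases h : l = l' <;> simp [word, lp.single_apply, h]

lemma orthonormal_word_cons (l : List ι) :
    Orthonormal 𝕜 fun i ↦ (word (i :: l) : FullFockSpace 𝕜 ι) :=
  orthonormal_word.comp (· :: l) fun _ _ h ↦ (List.cons.inj h).1

lemma norm_vacuum : ‖(vacuum : FullFockSpace 𝕜 ι)‖ = 1 := orthonormal_word.1 []

variable {K : Type*} [NormedAddCommGroup K] [InnerProductSpace 𝕜 K] (b : HilbertBasis ι 𝕜 K)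

/-- The isometry `k ↦ k ⊗ l` for a fixed word `l`. -/
def prependTo (l : List ι) : K →ₗᵢ[𝕜] FullFockSpace 𝕜 ι :=
  (orthonormal_word_cons l).orthogonalFamily.linearIsometry.comp b.repr.toLinearIsometry

lemma inner_prependTo_eq_zero {x : FullFockSpace 𝕜 ι} {l : List ι}
    (hx : ∀ i, inner 𝕜 x (word (i :: l)) = 0) (k : K) : inner 𝕜 x (prependTo b l k) = 0 :=
  inner_linearIsometry_eq_zero (orthonormal_word_cons l).orthogonalFamily fun i ↦ by
    simp [inner_smul_right, hx]

lemma orthogonalFamily_prependTo : OrthogonalFamily 𝕜 (fun _ : List ι ↦ K) (prependTo b) := by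
  intro l l' hl k k'
  refine inner_prependTo_eq_zero b (fun i ↦ ?_) k'
  refine inner_eq_zero_symm.1 (inner_prependTo_eq_zero b (fun j ↦ ?_) k)
  exact orthonormal_word.2 fun h ↦ hl (List.cons.inj h).2.symm

/-- The isometry from `K ⊗ F`, realized as the `K`-valued families indexed by words, onto the
orthogonal complement of the vacuum in the full Fock space `F` of `K`. -/
def attach : lp (fun _ : List ι ↦ K) 2 →ₗᵢ[𝕜] FullFockSpace 𝕜 ι :=
  (orthogonalFamily_prependTo b).linearIsometry

lemma inner_vacuum_attach (f : lp (fun _ : List ι ↦ K) 2) :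
    inner 𝕜 vacuum (attach b f) = 0 :=
  inner_linearIsometry_eq_zero _ fun _ ↦
    inner_prependTo_eq_zero b (fun _ ↦ orthonormal_word.2 (List.cons_ne_nil _ _).symm) _

/-- The left creation operator `k ⊗ ·` on the full Fock space. -/
def creation : K →ₗ[𝕜] FullFockSpace 𝕜 ι →L[𝕜] FullFockSpace 𝕜 ι where
  toFun k := (attach b).toContinuousLinearMap ∘L
    ampliation (List ι) (ContinuousLinearMap.toSpanSingleton 𝕜 k)
  map_add' k k' := by
    ext1 x
    refine (congrArg (attach b) (lp.ext <| funext fun l ↦ ?_)).trans (map_add (attach b) _ _)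
    exact smul_add (x l) k k'
  map_smul' a k := by
    ext1 x
    refine (congrArg (attach b) (lp.ext <| funext fun l ↦ ?_)).trans (map_smul (attach b) _ _)
    exact smul_comm (x l) a k

lemma inner_vacuum_creation (k : K) (x : FullFockSpace 𝕜 ι) :
    inner 𝕜 vacuum (creation b k x) = 0 :=
  inner_vacuum_attach b _

lemma adjoint_creation_vacuum (k : K) : (creation b k).adjoint vacuum = 0 := by
  refine ext_inner_right 𝕜 fun x ↦ ?_
  rw [ContinuousLinearMap.adjoint_inner_left, inner_zero_left, inner_vacuum_creation]

lemma adjoint_creation_apply_creation (k k' : K) (x : FullFockSpace 𝕜 ι) :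
    (creation b k).adjoint (creation b k' x) = inner 𝕜 k k' • x := by
  refine ext_inner_left 𝕜 fun y ↦ ?_
  rw [ContinuousLinearMap.adjoint_inner_right]
  refine ((attach b).inner_map_map _ _).trans ?_
  rw [lp.inner_eq_tsum, inner_smul_right, lp.inner_eq_tsum, ← tsum_mul_left]
  refine tsum_congr fun l ↦ ?_
  change inner 𝕜 (y l • k) (x l • k') = _
  rw [inner_smul_left, inner_smul_right, RCLike.inner_apply]
  ring

lemma norm_creation_apply (k : K) (x : FullFockSpace 𝕜 ι) :
    ‖creation b k x‖ = ‖k‖ * ‖x‖ := by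
  rw [← sq_eq_sq₀ (norm_nonneg _) (by positivity), ← inner_self_eq_norm_sq (𝕜 := 𝕜),
    ← ContinuousLinearMap.adjoint_inner_right, adjoint_creation_apply_creation, inner_smul_right,
    inner_self_eq_norm_sq_to_K, inner_self_eq_norm_sq_to_K, mul_pow]
  norm_cast

lemma norm_creation_le (k : K) : ‖creation b k‖ ≤ ‖k‖ :=
  ContinuousLinearMap.opNorm_le_bound _ (norm_nonneg k) fun x ↦ (norm_creation_apply b k x).le

variable [CompleteSpace K]

lemma adjoint_attach_apply_attach (f : lp (fun _ : List ι ↦ K) 2) :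
    (attach b).toContinuousLinearMap.adjoint (attach b f) = f :=
  DFunLike.congr_fun (attach b).adjoint_comp_self f

lemma adjoint_attach_vacuum : (attach b).toContinuousLinearMap.adjoint vacuum = 0 := by
  refine ext_inner_right 𝕜 fun f ↦ ?_
  rw [ContinuousLinearMap.adjoint_inner_left, inner_zero_left]
  exact inner_vacuum_attach b f

/-- The preservation operator of `B` on the full Fock space: it applies `B` to the first tensor
factor and kills the vacuum. -/
def preservation (B : K →L[𝕜] K) : FullFockSpace 𝕜 ι →L[𝕜] FullFockSpace 𝕜 ι :=
  (attach b).toContinuousLinearMap ∘L ampliation (List ι) B ∘L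
    (attach b).toContinuousLinearMap.adjoint

lemma isSelfAdjoint_preservation {B : K →L[𝕜] K} (hB : IsSelfAdjoint B) :
    IsSelfAdjoint (preservation b B) := by
  have hamp : IsSelfAdjoint (ampliation (List ι) B) := by
    rw [ContinuousLinearMap.isSelfAdjoint_iff', adjoint_ampliation, hB.adjoint_eq]
  exact hamp.conj_adjoint _

lemma preservation_vacuum (B : K →L[𝕜] K) : preservation b B vacuum = 0 := by
  simp [preservation, adjoint_attach_vacuum]

lemma preservation_creation (B : K →L[𝕜] K) (k : K) (x : FullFockSpace 𝕜 ι) :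
    preservation b B (creation b k x) = creation b (B k) x := by
  refine congrArg (attach b) ?_
  refine (congrArg (ampliation (List ι) B) (adjoint_attach_apply_attach b _)).trans ?_
  exact lp.ext <| funext fun l ↦ map_smul B (x l) k

end FullFockSpace

end FockSpace

section FreePower

variable {ι K : Type*} [NormedAddCommGroup K] [InnerProductSpace ℂ K]

section Compression

variable {T : K →L[ℂ] K} {o f : K} {v m : ℂ}

/-- The compression of `T` to the orthogonal complement of the unit vector `o`, extended by `0`. -/
def compression (T : K →L[ℂ] K) (o : K) : K →L[ℂ] K :=
  (1 - rankOne ℂ o o) ∘L T ∘L (1 - rankOne ℂ o o)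

lemma isSelfAdjoint_compression [CompleteSpace K] (hT : IsSelfAdjoint T) (o : K) :
    IsSelfAdjoint (compression T o) := by
  have hproj : IsSelfAdjoint (1 - rankOne ℂ o o) :=
    (IsSelfAdjoint.one _).sub (isPositive_rankOne_self o).isSelfAdjoint
  have hconj := hT.conj_adjoint (1 - rankOne ℂ o o)
  rwa [hproj.adjoint_eq] at hconj

lemma IsKernelVector.smul_compression_apply (h : IsKernelVector T o v m f) (ho : ‖o‖ = 1)
    (hmean : inner ℂ o (T o) = 0) :
    m • compression T o (f - o) = (v + m ^ 2) • (f - o) - m • T o := by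
  have hproj : (1 - rankOne ℂ o o) (f - o) = f - o := by
    simp [inner_sub_right, h.inner_eq_one, ho]
  have hcomp : compression T o (f - o) = T f - T o - inner ℂ o (T f) • o := by
    rw [compression, ContinuousLinearMap.comp_apply, ContinuousLinearMap.comp_apply, hproj]
    simp [inner_sub_right, hmean]
  rw [hcomp, smul_sub, smul_sub, smul_smul, h.mul_inner_apply ho, h.smul_apply_eq]
  module

lemma IsKernelVector.mul_inner_apply_sub [CompleteSpace K] (h : IsKernelVector T o v m f)
    (hT : IsSelfAdjoint T) (ho : ‖o‖ = 1) (hmean : inner ℂ o (T o) = 0) :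
    m * inner ℂ (T o) (f - o) = m ^ 2 := by
  have hsymm : inner ℂ (T o) (f - o) = inner ℂ o (T (f - o)) :=
    ContinuousLinearMap.isSelfAdjoint_iff_isSymmetric.1 hT o (f - o)
  rw [hsymm, map_sub, inner_sub_right, hmean, sub_zero, h.mul_inner_apply ho]

end Compression

lemma isSelfAdjoint_ofReal_smul {H : Type*} [NormedAddCommGroup H] [InnerProductSpace ℂ H]
    [CompleteSpace H] {A : H →L[ℂ] H} (hA : IsSelfAdjoint A) (r : ℝ) :
    IsSelfAdjoint ((r : ℂ) • A) :=
  IsSelfAdjoint.smul (Complex.conj_ofReal r) hA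

open FullFockSpace

/-- The diagonal operator on the full Fock space that multiplies the vacuum by `s` and its
orthogonal complement by `t`. -/
def vacuumWeight (ι : Type*) (s t : ℝ) : FullFockSpace ℂ ι →L[ℂ] FullFockSpace ℂ ι :=
  (t : ℂ) • 1 + ((s - t : ℝ) : ℂ) • rankOne ℂ vacuum vacuum

lemma isSelfAdjoint_vacuumWeight (s t : ℝ) : IsSelfAdjoint (vacuumWeight ι s t) :=
  (isSelfAdjoint_ofReal_smul (.one _) t).add
    (isSelfAdjoint_ofReal_smul (isPositive_rankOne_self vacuum).isSelfAdjoint (s - t))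

lemma vacuumWeight_vacuum (s t : ℝ) :
    vacuumWeight ι s t vacuum = (s : ℂ) • (vacuum : FullFockSpace ℂ ι) := by
  simp only [vacuumWeight, add_apply, smul_apply, one_apply_eq_self, rankOne_apply,
    inner_self_eq_norm_sq_to_K, norm_vacuum]
  module

variable (b : HilbertBasis ι ℂ K)

lemma vacuumWeight_creation (s t : ℝ) (k : K) (x : FullFockSpace ℂ ι) :
    vacuumWeight ι s t (creation b k x) = (t : ℂ) • creation b k x := by
  simp only [vacuumWeight, add_apply, smul_apply, one_apply_eq_self, rankOne_apply,
    inner_vacuum_creation, zero_smul, smul_zero, add_zero]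

lemma exists_eq_vacuum_add_smul_creation {u : K} {t : ℝ} (htu : |t| * ‖u‖ < 1) :
    ∃ φ : FullFockSpace ℂ ι, φ = vacuum + (t : ℂ) • creation b u φ := by
  have hnorm : ‖(t : ℂ) • creation b u‖ < 1 :=
    calc ‖(t : ℂ) • creation b u‖
        = |t| * ‖creation b u‖ := by rw [norm_smul, Complex.norm_real, Real.norm_eq_abs]
      _ ≤ |t| * ‖u‖ := by gcongr; exact norm_creation_le b u
      _ < 1 := htu
  obtain ⟨R, hR⟩ := (isUnit_one_sub_of_norm_lt_one hnorm).exists_right_inv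
  exact ⟨R vacuum, eq_add_of_sub_eq (DFunLike.congr_fun hR vacuum)⟩

variable [CompleteSpace K]

/-- The Fock space model of free convolution powers. Let `T` be a self-adjoint operator on `K` with
`⟪o, T o⟫ = 0`, `e = T o` and `B` the compression of `T` to the complement of `o`. If
`s ^ 2 = 1 + t ^ 2`, then the distribution of this operator in the vacuum state is the free
convolution power with exponent `s ^ 2` of the distribution of `T` in the state `o`. -/
def freePower (B : K →L[ℂ] K) (e : K) (s t : ℝ) : FullFockSpace ℂ ι →L[ℂ] FullFockSpace ℂ ι :=
  preservation b B + (creation b e ∘L vacuumWeight ι s t +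
    (creation b e ∘L vacuumWeight ι s t).adjoint)

variable {B : K →L[ℂ] K} {e u : K} {v m : ℂ} {s t : ℝ}

lemma isSelfAdjoint_freePower (hB : IsSelfAdjoint B) (e : K) (s t : ℝ) :
    IsSelfAdjoint (freePower b B e s t) :=
  (isSelfAdjoint_preservation b hB).add (.add_star_self _)

lemma freePower_apply (B : K →L[ℂ] K) (e : K) (s t : ℝ) (x : FullFockSpace ℂ ι) :
    freePower b B e s t x = preservation b B x + (creation b e (vacuumWeight ι s t x) +
      vacuumWeight ι s t ((creation b e).adjoint x)) := by
  simp only [freePower, ContinuousLinearMap.adjoint_comp,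
    (isSelfAdjoint_vacuumWeight s t).adjoint_eq]
  rfl

lemma freePower_vacuum (B : K →L[ℂ] K) (e : K) (s t : ℝ) :
    freePower b B e s t vacuum = (s : ℂ) • creation b e vacuum := by
  rw [freePower_apply, preservation_vacuum, vacuumWeight_vacuum, adjoint_creation_vacuum]
  simp only [map_smul, map_zero, zero_add, add_zero]

lemma freePower_creation (B : K →L[ℂ] K) (e u : K) (s t : ℝ) (x : FullFockSpace ℂ ι) :
    freePower b B e s t (creation b u x) = creation b (B u) x +
      ((t : ℂ) • creation b e (creation b u x) + inner ℂ e u • vacuumWeight ι s t x) := by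
  rw [freePower_apply, preservation_creation, vacuumWeight_creation,
    adjoint_creation_apply_creation, map_smul, map_smul]

lemma smul_freePower_apply_eq (hB : m • B u = (v + m ^ 2) • u - m • e)
    (he : m * inner ℂ e u = m ^ 2) (hst : s ^ 2 = 1 + t ^ 2) {φ : FullFockSpace ℂ ι}
    (hφ : φ = vacuum + (t : ℂ) • creation b u φ) :
    m • freePower b B e s t (vacuum + (s : ℂ) • creation b u φ) =
      (v + (s * m) ^ 2) • (s : ℂ) • creation b u φ + (s * m) ^ 2 • vacuum := by
  have hcreation_e : creation b e φ =
      creation b e vacuum + (t : ℂ) • creation b e (creation b u φ) := by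
    conv_lhs => rw [hφ]
    rw [map_add, map_smul]
  have hweight : vacuumWeight ι s t φ = (s : ℂ) • vacuum + (t : ℂ) ^ 2 • creation b u φ := by
    conv_lhs => rw [hφ]
    rw [map_add, map_smul, vacuumWeight_vacuum, vacuumWeight_creation, smul_smul, sq]
  have hcreation_B : m • creation b (B u) φ =
      (v + m ^ 2) • creation b u φ - m • creation b e φ := by
    rw [← smul_apply, ← map_smul, hB]
    simp
  have hinner : m • inner ℂ e u • vacuumWeight ι s t φ = m ^ 2 • vacuumWeight ι s t φ := by
    rw [smul_smul, he]
  have hst' : (s : ℂ) ^ 2 = 1 + (t : ℂ) ^ 2 := mod_cast hst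
  rw [map_add, map_smul, freePower_vacuum, freePower_creation]
  calc m • ((s : ℂ) • creation b e vacuum + (s : ℂ) • (creation b (B u) φ +
        ((t : ℂ) • creation b e (creation b u φ) + inner ℂ e u • vacuumWeight ι s t φ)))
      = (s : ℂ) • (m • (creation b e vacuum + (t : ℂ) • creation b e (creation b u φ)) +
        m • creation b (B u) φ + m • inner ℂ e u • vacuumWeight ι s t φ) := by module
    _ = (s : ℂ) • ((v + m ^ 2) • creation b u φ +
        m ^ 2 • ((s : ℂ) • vacuum + (t : ℂ) ^ 2 • creation b u φ)) := by
      rw [← hcreation_e, hcreation_B, hinner, hweight]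
      module
    _ = (v + m ^ 2 * (1 + (t : ℂ) ^ 2)) • (s : ℂ) • creation b u φ + (s * m) ^ 2 • vacuum := by
      module
    _ = _ := by rw [← hst', mul_pow, mul_comm (m ^ 2)]

theorem exists_isKernelVector_freePower (hB : m • B u = (v + m ^ 2) • u - m • e)
    (he : m * inner ℂ e u = m ^ 2) (hs : s ≠ 0) (hst : s ^ 2 = 1 + t ^ 2) (htu : |t| * ‖u‖ < 1) :
    ∃ ψ, IsKernelVector (((s⁻¹ : ℝ) : ℂ) • freePower b B e s t) vacuum v (s * m) ψ := by
  obtain ⟨φ, hφ⟩ := exists_eq_vacuum_add_smul_creation b htu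
  refine ⟨vacuum + (s : ℂ) • creation b u φ, ?_, ?_⟩
  · rw [inner_add_right, inner_smul_right, inner_vacuum_creation, inner_self_eq_norm_sq_to_K,
      norm_vacuum]
    simp
  · have hcancel (x : FullFockSpace ℂ ι) :
        (s * m) • (((s⁻¹ : ℝ) : ℂ) • freePower b B e s t) x = m • freePower b B e s t x := by
      rw [smul_apply, smul_smul]
      congr 1
      have hs' : (s : ℂ) ≠ 0 := mod_cast hs
      push_cast
      field_simp
    rw [smul_sub, hcancel, smul_freePower_apply_eq b hB he hst hφ]
    module

theorem IsCSKModel.freePower {T : K →L[ℂ] K} {o : K} {V : ℝ → ℝ} (h : IsCSKModel T o V)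
    (hs : s ≠ 0) (hst : s ^ 2 = 1 + t ^ 2) :
    IsCSKModel (((s⁻¹ : ℝ) : ℂ) • freePower b (compression T o) (T o) s t) vacuum
      (fun m ↦ V (m / s)) where
  isSelfAdjoint := isSelfAdjoint_ofReal_smul
    (isSelfAdjoint_freePower b (isSelfAdjoint_compression h.isSelfAdjoint o) _ _ _) _
  norm_eq_one := norm_vacuum
  inner_apply_eq_zero := by
    rw [smul_apply, freePower_vacuum, inner_smul_right, inner_smul_right, inner_vacuum_creation,
      mul_zero, mul_zero]
  norm_apply_eq_one := by
    rw [smul_apply, freePower_vacuum, smul_smul, ← Complex.ofReal_mul, inv_mul_cancel₀ hs,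
      Complex.ofReal_one, one_smul, norm_creation_apply, h.norm_apply_eq_one, norm_vacuum, one_mul]
  analyticAt := AnalyticAt.fun_comp (g := V) (f := fun m ↦ m / s)
    (by simpa using h.analyticAt) analyticAt_id.div_const
  pos := by simpa using h.pos
  eventually_exists := by
    have htendsto : Tendsto (fun m : ℝ ↦ m / s) (𝓝 0) (𝓝 0) := by
      simpa using (continuous_id.div_const s).tendsto 0
    filter_upwards [htendsto.eventually
      (h.eventually_exists_norm_sub_lt (δ := (|t| + 1)⁻¹) (by positivity))] with m ⟨f, hf, hlt⟩
    have htu : |t| * ‖f - o‖ < 1 := by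
      have hlt' : ‖f - o‖ * (|t| + 1) < 1 :=
        (lt_inv_mul_iff₀' (by positivity)).1 (by simpa using hlt)
      linarith [norm_nonneg (f - o)]
    have hm : (s : ℂ) * ((m / s : ℝ) : ℂ) = m := by
      exact_mod_cast mul_div_cancel₀ m hs
    rw [← hm]
    exact exists_isKernelVector_freePower b
      (hf.smul_compression_apply h.norm_eq_one h.inner_apply_eq_zero)
      (hf.mul_inner_apply_sub h.isSelfAdjoint h.norm_eq_one h.inner_apply_eq_zero) hs hst htu

end FreePower

theorem memV_scale_general (V : ℝ → ℝ) (c : ℝ) (hc : 1 ≤ |c|) (hV : memV V) :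
    memV (fun m => V (m / c)) := by
  obtain ⟨ν, ⟨hν, ⟨R, hR⟩, -, hmean⟩, hvar, hνV⟩ := hV
  have hR' : ∀ᵐ x ∂ν, x ∈ Set.Icc (-R) R := hR
  obtain ⟨g, hmodel⟩ := exists_isCSKModel_mulOperator isCompact_Icc hR' hmean hvar hνV
  obtain ⟨ι, b, -⟩ := exists_hilbertBasis ℂ (Lp ℂ 2 ν)
  have hc0 : c ≠ 0 := abs_pos.1 (one_pos.trans_le hc)
  have hsq : c ^ 2 = 1 + √(c ^ 2 - 1) ^ 2 := by
    rw [Real.sq_sqrt (sub_nonneg.2 ((one_le_sq_iff_one_le_abs c).2 hc)), add_sub_cancel]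
  exact (hmodel.freePower b hc0 hsq).memV

/-- If `V ∈ 𝒱` and `c ≥ 1` then `m ↦ V(m/c) ∈ 𝒱`. -/
theorem memV_scale (V : ℝ → ℝ) (c : ℝ) (hc : 1 ≤ c) (hV : memV V) :
    memV (fun m => V (m / c)) :=
  memV_scale_general V c (hc.trans (le_abs_self c)) hV
end
end

section
/- If the functions V₁(m) and V₂(m) both belong to the class 𝒱∞, then the function m ↦ V₁(m) + V₂(m) − 1 also belongs to 𝒱∞. -/
open MeasureTheory Filter

noncomputable section

/-!
Write `V = ∑ v k m ^ k` with `v 0 = 1`, and put `H = ∑ v (i + j + 2) x ^ i y ^ j`. Expanding the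
Cauchy–Stieltjes kernel as `∑ f k (x) m ^ k` gives polynomials `f k` of degree `k`, so the CSK
conditions prescribe all moments of the generating measure, namely `∫ f 0 = 1` and `∫ f k = 0` for
`k > 0`. The Gram matrix `∫ f i * f j` then has generating kernel `1 + x y / (1 - x y (H + 1))`, and
since analyticity of `V` confines the support to an interval, solving the moment problem shows that
`V ∈ 𝒱` if and only if `1 / (1 - x y (H + 1))` is positive semidefinite.

Replacing `V(m)` by `V(c m)` and rescaling `x` and `y` turns `H + 1` into `H + c⁻²`. Letting
`c → ∞`, we get that `V ∈ 𝒱∞` if and only if `1 / (1 - x y H)` is positive semidefinite.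

Finally, `H` is additive in `V - 1`. If `Sᵢ = 1 / (1 - x y Hᵢ)` and `Aᵢ = Sᵢ - 1`, then
`1 / (1 - x y (H₁ + H₂)) = S₁ S₂ / (1 - A₁ A₂)`, and this is positive semidefinite because the
positive semidefinite kernels form a closed semiring.
-/

namespace CSK

section MomentProblem

open Polynomial
open scoped CompactlySupported

/-- The preordering of `ℝ[X]` generated by `(X - a) * (b - X)`, which describes the interval
`[a, b]`. -/
def intervalPreordering (a b : ℝ) : Subsemiring ℝ[X] :=
  Subsemiring.closure (insert ((X - C a) * (C b - X)) {p | IsSquare p})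

variable {a b : ℝ}

lemma mem_intervalPreordering_of_isSquare {p : ℝ[X]} (hp : IsSquare p) :
    p ∈ intervalPreordering a b :=
  Subsemiring.subset_closure (Set.mem_insert_of_mem _ hp)

lemma C_mem_intervalPreordering {c : ℝ} (hc : 0 ≤ c) : C c ∈ intervalPreordering a b :=
  mem_intervalPreordering_of_isSquare ⟨C √c, by rw [← C_mul, Real.mul_self_sqrt hc]⟩

lemma X_sub_C_mul_C_sub_X_mem_intervalPreordering :
    (X - C a) * (C b - X) ∈ intervalPreordering a b :=
  Subsemiring.subset_closure (Set.mem_insert _ _)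

lemma C_inv_sub_mul_C_sub_C (hab : a < b) : (C (b - a)⁻¹ * (C b - C a) : ℝ[X]) = 1 := by
  rw [← C_sub, ← C_mul, inv_mul_cancel₀ (sub_ne_zero.2 hab.ne'), C_1]

lemma X_sub_C_mem_intervalPreordering (hab : a < b) {c : ℝ} (hc : c ≤ a) :
    X - C c ∈ intervalPreordering a b := by
  have eq : X - C c = C (b - a)⁻¹ * ((X - C a) * (X - C a) + (X - C a) * (C b - X)) +
      C (a - c) := by
    rw [C_sub (a := a)]
    linear_combination (C a - X) * C_inv_sub_mul_C_sub_C hab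
  rw [eq]
  exact add_mem (mul_mem (C_mem_intervalPreordering (inv_nonneg.2 (sub_nonneg.2 hab.le)))
    (add_mem (mem_intervalPreordering_of_isSquare ⟨_, rfl⟩)
      X_sub_C_mul_C_sub_X_mem_intervalPreordering)) (C_mem_intervalPreordering (sub_nonneg.2 hc))

lemma C_sub_X_mem_intervalPreordering (hab : a < b) {c : ℝ} (hc : b ≤ c) :
    C c - X ∈ intervalPreordering a b := by
  have eq : C c - X = C (b - a)⁻¹ * ((C b - X) * (C b - X) + (X - C a) * (C b - X)) +
      C (c - b) := by
    rw [C_sub (a := c)]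
    linear_combination (X - C b) * C_inv_sub_mul_C_sub_C hab
  rw [eq]
  exact add_mem (mul_mem (C_mem_intervalPreordering (inv_nonneg.2 (sub_nonneg.2 hab.le)))
    (add_mem (mem_intervalPreordering_of_isSquare ⟨_, rfl⟩)
      X_sub_C_mul_C_sub_X_mem_intervalPreordering)) (C_mem_intervalPreordering (sub_nonneg.2 hc))

lemma exists_dvd_mem_intervalPreordering (hab : a < b) {p : ℝ[X]} (hdeg : 0 < p.degree)
    (hp : ∀ x ∈ Set.Icc a b, 0 < p.eval x) :
    ∃ q ∈ intervalPreordering a b, q ∣ p ∧ 0 < q.natDegree ∧ ∀ x ∈ Set.Icc a b, 0 < q.eval x := by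
  obtain ⟨z, hz⟩ := Complex.exists_root (f := p.map (algebraMap ℝ ℂ)) (by rwa [degree_map])
  rw [IsRoot, eval_map_algebraMap] at hz
  by_cases him : z.im = 0
  · have root : p.IsRoot z.re := by
      rw [← Complex.re_add_im z, him, Complex.ofReal_zero, zero_mul, add_zero] at hz
      have := (aeval_algebraMap_apply ℂ z.re p).symm.trans hz
      simpa using this
    have hdvd := dvd_iff_isRoot.2 root
    have notMem : z.re ∉ Set.Icc a b := fun h ↦ (hp _ h).ne' root
    rw [Set.mem_Icc, not_and_or, not_le, not_le] at notMem
    rcases notMem with hlt | hlt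
    · exact ⟨_, X_sub_C_mem_intervalPreordering hab hlt.le, hdvd, by simp, fun x hx ↦ by
        simpa using hlt.trans_le hx.1⟩
    · refine ⟨_, C_sub_X_mem_intervalPreordering hab hlt.le, ?_, ?_, fun x hx ↦ by
        simpa using hx.2.trans_lt hlt⟩
      · rwa [← neg_sub, neg_dvd]
      · rw [← neg_sub, natDegree_neg, natDegree_X_sub_C]
        exact one_pos
  · have eq : (X ^ 2 - C (2 * z.re) * X + C (‖z‖ ^ 2) : ℝ[X]) =
        (X - C z.re) * (X - C z.re) + C (z.im ^ 2) := by
      rw [Complex.sq_norm, Complex.normSq_apply]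
      simp only [C_mul, C_add, C_pow, C_ofNat]
      ring
    refine ⟨_, ?_, quadratic_dvd_of_aeval_eq_zero_im_ne_zero p hz him, ?_, fun x _ ↦ ?_⟩
    · rw [eq]
      exact add_mem (mem_intervalPreordering_of_isSquare ⟨_, rfl⟩)
        (C_mem_intervalPreordering (sq_nonneg _))
    · rw [natDegree_eq_of_degree_eq_some (n := 2) (by compute_degree!)]
      exact two_pos
    · rw [eq]
      simp only [eval_add, eval_mul, eval_sub, eval_X, eval_C]
      exact add_pos_of_nonneg_of_pos (mul_self_nonneg _) (sq_pos_of_ne_zero him)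

lemma mem_intervalPreordering_of_forall_pos (hab : a < b) {p : ℝ[X]}
    (hp : ∀ x ∈ Set.Icc a b, 0 < p.eval x) : p ∈ intervalPreordering a b := by
  induction hn : p.natDegree using Nat.strong_induction_on generalizing p with
  | _ n ih => ?_
  rcases le_or_gt p.degree 0 with hdeg | hdeg
  · rw [eq_C_of_degree_le_zero hdeg] at hp ⊢
    refine C_mem_intervalPreordering (le_of_lt ?_)
    simpa using hp a (Set.left_mem_Icc.2 hab.le)
  · obtain ⟨q, hq, ⟨r, rfl⟩, hqdeg, hqpos⟩ := exists_dvd_mem_intervalPreordering hab hdeg hp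
    have ⟨hq₀, hr₀⟩ := mul_ne_zero_iff.1 (ne_zero_of_degree_gt hdeg)
    rw [natDegree_mul hq₀ hr₀] at hn
    refine mul_mem hq (ih r.natDegree (by omega) (fun x hx ↦ ?_) rfl)
    exact (pos_iff_pos_of_mul_pos (eval_mul (p := q) ▸ hp x hx)).1 (hqpos x hx)

lemma nonneg_of_mem_intervalPreordering {L : ℝ[X] →ₗ[ℝ] ℝ} (hsq : ∀ p, 0 ≤ L (p * p))
    (hab : ∀ p, 0 ≤ L ((X - C a) * (C b - X) * (p * p))) {p : ℝ[X]}
    (hp : p ∈ intervalPreordering a b) : 0 ≤ L p := by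
  set g := (X - C a) * (C b - X)
  let products : Submonoid ℝ[X] :=
    { carrier := {q | ∃ (i : ℕ) (s : ℝ[X]), q = g ^ i * (s * s)}
      one_mem' := ⟨0, 1, by simp⟩
      mul_mem' := by
        rintro _ _ ⟨i, s, rfl⟩ ⟨j, t, rfl⟩
        exact ⟨i + j, s * t, by ring⟩ }
  have generators_le : insert g {p | IsSquare p} ⊆ (products : Set ℝ[X]) := by
    rintro _ (rfl | ⟨s, rfl⟩)
    · exact ⟨1, 1, by simp⟩
    · exact ⟨0, s, by simp⟩
  refine AddSubmonoid.closure_induction (fun q hq ↦ ?_) (map_zero L).ge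
    (fun p q _ _ hp hq ↦ (map_add L p q).symm ▸ add_nonneg hp hq) (Subsemiring.mem_closure_iff.1 hp)
  obtain ⟨i, s, rfl⟩ := Submonoid.closure_le.2 generators_le hq
  obtain ⟨k, rfl | rfl⟩ := i.even_or_odd'
  · convert hsq (g ^ k * s) using 2
    ring
  · convert hab (g ^ k * s) using 2
    ring

lemma nonneg_of_forall_mem_Icc_nonneg (h : a < b) {L : ℝ[X] →ₗ[ℝ] ℝ} (hsq : ∀ p, 0 ≤ L (p * p))
    (hab : ∀ p, 0 ≤ L ((X - C a) * (C b - X) * (p * p))) {p : ℝ[X]}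
    (hp : ∀ x ∈ Set.Icc a b, 0 ≤ p.eval x) : 0 ≤ L p := by
  have perturbed {ε : ℝ} (hε : 0 < ε) : 0 ≤ L p + ε * L 1 := by
    rw [← smul_eq_mul, ← map_smul, ← map_add]
    refine nonneg_of_mem_intervalPreordering hsq hab <|
      mem_intervalPreordering_of_forall_pos h fun x hx ↦ ?_
    simpa using add_pos_of_nonneg_of_pos (hp x hx) hε
  have tendsto : Tendsto (fun ε : ℝ ↦ L p + ε * L 1) (nhdsWithin 0 (Set.Ioi 0)) (nhds (L p)) := by
    have : Continuous fun ε : ℝ ↦ L p + ε * L 1 := by fun_prop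
    simpa using (this.tendsto 0).mono_left nhdsWithin_le_nhds
  exact ge_of_tendsto tendsto (eventually_nhdsWithin_of_forall fun ε ↦ perturbed)

lemma exists_positiveLinearMap_comp_eq {E F : Type*} [AddCommGroup E] [Module ℝ E] [AddCommGroup F]
    [PartialOrder F] [IsOrderedAddMonoid F] [Module ℝ F] [PosSMulMono ℝ F] (T : E →ₗ[ℝ] F)
    (L : E →ₗ[ℝ] ℝ) (hL : ∀ p, 0 ≤ T p → 0 ≤ L p) (hT : ∀ y, ∃ p, y ≤ T p) :
    ∃ G : F →ₚ[ℝ] ℝ, ∀ p, G (T p) = L p := by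
  have ker_le : LinearMap.ker T ≤ LinearMap.ker L := fun p hp ↦ by
    rw [LinearMap.mem_ker] at hp ⊢
    refine le_antisymm ?_ (hL p hp.ge)
    simpa using hL (-p) (by rw [map_neg, hp, neg_zero])
  let f : F →ₗ.[ℝ] ℝ :=
    ⟨LinearMap.range T, (LinearMap.ker T).liftQ L ker_le ∘ₗ T.quotKerEquivRange.symm⟩
  have f_apply (p : E) : f ⟨T p, LinearMap.mem_range_self T p⟩ = L p := by
    change (LinearMap.ker T).liftQ L ker_le (T.quotKerEquivRange.symm _) = _
    rw [LinearMap.quotKerEquivRange_symm_apply_image, Submodule.mkQ_apply, Submodule.liftQ_apply]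
  obtain ⟨G, hGf, hG⟩ := riesz_extension (PointedCone.positive ℝ F) f
    (by
      rintro ⟨_, p, rfl⟩ hp
      exact (f_apply p).symm ▸ hL p hp)
    fun y ↦ by
      obtain ⟨p, hp⟩ := hT (-y)
      exact ⟨⟨T p, LinearMap.mem_range_self T p⟩, neg_le_iff_add_nonneg.1 hp⟩
  exact ⟨.mk₀ G hG, fun p ↦ (hGf ⟨T p, LinearMap.mem_range_self T p⟩).trans (f_apply p)⟩

lemma exists_measure_forall_integral_eq {K : Set ℝ} (hK : IsCompact K) {L : ℝ[X] →ₗ[ℝ] ℝ}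
    (hL : ∀ p : ℝ[X], (∀ x ∈ K, 0 ≤ p.eval x) → 0 ≤ L p) :
    ∃ ν : Measure ℝ, ν Kᶜ = 0 ∧ ∀ p : ℝ[X], ∫ x, p.eval x ∂ν = L p := by
  have : CompactSpace K := isCompact_iff_compactSpace.1 hK
  have : PosSMulMono ℝ C_c(K, ℝ) := ⟨fun c hc _ _ hfg x ↦ mul_le_mul_of_nonneg_left (hfg x) hc⟩
  let T : ℝ[X] →ₗ[ℝ] C_c(K, ℝ) :=
    { toFun p := CompactlySupportedContinuousMap.continuousMapEquiv (p.toContinuousMapOn K)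
      map_add' p q := by ext; simp
      map_smul' c p := by ext; simp }
  have T_apply (p : ℝ[X]) (x : K) : T p x = p.eval (x : ℝ) := rfl
  obtain ⟨Λ, hΛ⟩ := exists_positiveLinearMap_comp_eq T L (fun p hp ↦ hL p fun x hx ↦
    CompactlySupportedContinuousMap.le_def.1 hp ⟨x, hx⟩)
    fun g ↦ by
      obtain ⟨c, hc⟩ := (isCompact_range g.continuous).bddAbove
      exact ⟨C c, fun x ↦ by simpa [T_apply] using hc ⟨x, rfl⟩⟩
  have embedding : MeasurableEmbedding ((↑) : K → ℝ) := .subtype_coe hK.measurableSet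
  refine ⟨(RealRMK.rieszMeasure Λ).map (↑), ?_, fun p ↦ ?_⟩
  · rw [embedding.map_apply, Set.preimage_compl, Subtype.coe_preimage_self, Set.compl_univ,
      measure_empty]
  · rw [embedding.integral_map, ← hΛ, ← RealRMK.integral_rieszMeasure]
    rfl

lemma le_mul_of_sq_le_mul {a : ℕ → ℝ} (ha : ∀ k, 0 ≤ a k)
    (hconvex : ∀ k, a (k + 1) ^ 2 ≤ a k * a (k + 2)) {M B : ℝ} (hB : 0 < B)
    (hbound : ∀ k, a k ≤ M * B ^ k) : a 1 ≤ B * a 0 := by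
  by_contra! hlt
  have ha₁ : 0 < a 1 := (mul_nonneg hB.le (ha 0)).trans_lt hlt
  have ha₀ : 0 < a 0 := (ha 0).lt_of_ne fun h ↦ by
    have := hconvex 0
    rw [← h, zero_mul] at this
    exact this.not_gt (pow_pos ha₁ 2)
  set q := a 1 / a 0
  have hBq : B < q := (lt_div_iff₀ ha₀).2 hlt
  have hq : 0 < q := hB.trans hBq
  have ratio (k : ℕ) : 0 < a k ∧ q * a k ≤ a (k + 1) := by
    induction k with
    | zero => exact ⟨ha₀, (div_mul_cancel₀ _ ha₀.ne').le⟩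
    | succ k ih =>
      have hpos := (mul_pos hq ih.1).trans_le ih.2
      refine ⟨hpos, le_of_mul_le_mul_left ?_ ih.1⟩
      calc a k * (q * a (k + 1)) = q * a k * a (k + 1) := by ring
        _ ≤ a (k + 1) * a (k + 1) := mul_le_mul_of_nonneg_right ih.2 hpos.le
        _ ≤ a k * a (k + 2) := sq (a (k + 1)) ▸ hconvex k
  have geometric (k : ℕ) : q ^ k * a 0 ≤ a k := geom_le hq.le k fun i _ ↦ (ratio i).2
  obtain ⟨n, hn⟩ := pow_unbounded_of_one_lt (M / a 0) ((one_lt_div hB).2 hBq)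
  rw [div_pow, lt_div_iff₀ (pow_pos hB n), div_mul_eq_mul_div, div_lt_iff₀ ha₀] at hn
  exact ((geometric n).trans (hbound n)).not_gt hn

section PositiveFunctional

variable {L : ℝ[X] →ₗ[ℝ] ℝ}

lemma sq_apply_mul_le (hsq : ∀ p, 0 ≤ L (p * p)) (p q : ℝ[X]) :
    L (p * q) ^ 2 ≤ L (p * p) * L (q * q) := by
  have nonneg (t : ℝ) : 0 ≤ L (q * q) * (t * t) + 2 * L (p * q) * t + L (p * p) := by
    have expand : (p + t • q) * (p + t • q) =
        (t * t) • (q * q) + (2 * t) • (p * q) + p * p := by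
      simp only [smul_eq_C_mul, C_mul, C_ofNat]
      ring
    have := hsq (p + t • q)
    simp only [expand, map_add, map_smul, smul_eq_mul] at this
    linarith
  have := discrim_le_zero nonneg
  rw [discrim] at this
  linarith

lemma exists_abs_apply_X_pow_mul_le {D : ℝ} (hbound : ∀ n, |L (X ^ n)| ≤ D ^ n) (q : ℝ[X]) :
    ∃ M, ∀ n, |L (X ^ n * q)| ≤ M * D ^ n := by
  induction q using Polynomial.induction_on' with
  | add p q hp hq =>
    obtain ⟨M₁, h₁⟩ := hp
    obtain ⟨M₂, h₂⟩ := hq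
    refine ⟨M₁ + M₂, fun n ↦ ?_⟩
    rw [mul_add, map_add, add_mul]
    exact (abs_add_le _ _).trans (add_le_add (h₁ n) (h₂ n))
  | monomial k c =>
    refine ⟨|c| * D ^ k, fun n ↦ ?_⟩
    rw [← C_mul_X_pow_eq_monomial, mul_left_comm, ← pow_add, ← smul_eq_C_mul, map_smul, smul_eq_mul,
      abs_mul, mul_assoc, ← pow_add, add_comm k]
    exact mul_le_mul_of_nonneg_left (hbound _) (abs_nonneg c)

lemma apply_X_mul_mul_self_le {D : ℝ} (hsq : ∀ p, 0 ≤ L (p * p)) (hD : 0 < D)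
    (hbound : ∀ n, |L (X ^ n)| ≤ D ^ n) (p : ℝ[X]) :
    L (X * p * (X * p)) ≤ D ^ 2 * L (p * p) := by
  obtain ⟨M, hM⟩ := exists_abs_apply_X_pow_mul_le hbound (p * p)
  have := le_mul_of_sq_le_mul (a := fun k ↦ L (X ^ k * p * (X ^ k * p))) (fun k ↦ hsq _)
    (fun k ↦ ?_) (pow_pos hD 2) (M := M) fun k ↦ ?_
  · simpa using this
  · convert sq_apply_mul_le hsq (X ^ k * p) (X ^ (k + 2) * p) using 3
    ring
  · rw [← pow_mul, show X ^ k * p * (X ^ k * p) = X ^ (2 * k) * (p * p) by ring]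
    exact (le_abs_self _).trans (hM _)

lemma exists_measure_Icc_forall_integral_eq {D : ℝ} (hsq : ∀ p, 0 ≤ L (p * p)) (hD : 0 < D)
    (hbound : ∀ n, |L (X ^ n)| ≤ D ^ n) :
    ∃ ν : Measure ℝ, ν (Set.Icc (-D) D)ᶜ = 0 ∧ ∀ p : ℝ[X], ∫ x, p.eval x ∂ν = L p := by
  refine exists_measure_forall_integral_eq isCompact_Icc fun p hp ↦
    nonneg_of_forall_mem_Icc_nonneg (neg_lt_self hD) hsq (fun q ↦ ?_) hp
  have expand : (X - C (-D)) * (C D - X) * (q * q) = D ^ 2 • (q * q) - X * q * (X * q) := by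
    rw [smul_eq_C_mul, C_neg, C_pow]
    ring
  rw [expand, map_sub, map_smul, smul_eq_mul]
  exact sub_nonneg.2 (apply_X_mul_mul_self_le hsq hD hbound q)

end PositiveFunctional

end MomentProblem

open PowerSeries
open Finset.HasAntidiagonal (antidiagonal)
open scoped PowerSeries.WithPiTopology Kronecker

section PosSemidefKernels

/-- The matrix `(a i j)` of a kernel `∑ a i j x ^ i y ^ j`, encoded as a power series in `x` (the
outer variable `X`) over the power series in `y` (the inner variable `C X`). -/
def coeffMatrix (K : ℝ⟦X⟧⟦X⟧) : Matrix ℕ ℕ ℝ := .of fun i j ↦ coeff j (coeff i K)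

lemma coeffMatrix_apply (K : ℝ⟦X⟧⟦X⟧) (i j : ℕ) : coeffMatrix K i j = coeff j (coeff i K) := rfl

lemma coeffMatrix_injective : Function.Injective coeffMatrix := fun _ _ h ↦
  PowerSeries.ext fun i ↦ PowerSeries.ext fun j ↦ congrFun₂ h i j

lemma coeffMatrix_mul (A B : ℝ⟦X⟧⟦X⟧) (i j : ℕ) :
    coeffMatrix (A * B) i j = ∑ p ∈ antidiagonal i, ∑ q ∈ antidiagonal j,
      coeffMatrix A p.1 q.1 * coeffMatrix B p.2 q.2 := by
  simp only [coeffMatrix_apply, coeff_mul, map_sum]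

lemma coeffMatrix_add (A B : ℝ⟦X⟧⟦X⟧) :
    coeffMatrix (A + B) = coeffMatrix A + coeffMatrix B := rfl

lemma coeffMatrix_one (i j : ℕ) : coeffMatrix 1 i j = if i = 0 ∧ j = 0 then 1 else 0 := by
  rw [coeffMatrix_apply, coeff_one]
  split_ifs <;> simp_all [coeff_one]

lemma continuous_coeffMatrix : Continuous coeffMatrix :=
  continuous_matrix fun i j ↦
    (WithPiTopology.continuous_coeff ℝ j).comp (WithPiTopology.continuous_coeff ℝ⟦X⟧ i)

/-- The leading principal `N × N` submatrix of an infinite matrix. -/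
abbrev leadingSubmatrix {R : Type*} (M : Matrix ℕ ℕ R) (N : ℕ) : Matrix (Fin N) (Fin N) R :=
  M.submatrix Fin.val Fin.val

lemma posSemidef_iff_leadingSubmatrix {M : Matrix ℕ ℕ ℝ} :
    M.PosSemidef ↔ ∀ N, (leadingSubmatrix M N).PosSemidef := by
  refine ⟨fun h N ↦ h.submatrix _, fun h ↦ ⟨?_, fun x ↦ ?_⟩⟩
  · ext i j
    exact (h (i + j + 1)).isHermitian.apply ⟨i, by omega⟩ ⟨j, by omega⟩
  · obtain ⟨N, hN⟩ : ∃ N, x.support ⊆ Finset.range N :=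
      ⟨x.support.sup id + 1, fun i hi ↦ Finset.mem_range_succ_iff.2 (Finset.le_sup (f := id) hi)⟩
    have key := (h N).dotProduct_mulVec_nonneg fun i ↦ x i
    have sum_eq (f : ℕ → ℝ → ℝ) (hf : ∀ i, f i 0 = 0) : x.sum f = ∑ i : Fin N, f i (x i) := by
      rw [Finsupp.sum_of_support_subset x hN f fun i _ ↦ hf i, Finset.sum_range]
    rw [sum_eq _ (by simp)]
    simp only [sum_eq _ fun _ ↦ mul_zero _]
    simpa only [dotProduct, Matrix.mulVec, Matrix.submatrix_apply, Pi.star_apply, Finset.mul_sum,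
      ← mul_assoc] using key

lemma isClosed_setOf_posSemidef {n : Type*} : IsClosed {M : Matrix n n ℝ | M.PosSemidef} := by
  have apply_cont (i j : n) : Continuous fun M : Matrix n n ℝ ↦ M i j :=
    continuous_apply_apply i j
  simp only [Matrix.PosSemidef, Set.ofPred_and, Set.ofPred_forall]
  refine (isClosed_eq continuous_id.matrix_conjTranspose continuous_id).inter <|
    isClosed_iInter fun x ↦ isClosed_le continuous_const ?_
  exact continuous_finsetSum _ fun i _ ↦ continuous_finsetSum _ fun j _ ↦
    ((continuous_const.mul (apply_cont i j)).mul continuous_const)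

lemma sum_fin_prod_ite_add_eq {M : Type*} [AddCommMonoid M] {N : ℕ}
    (i : Fin N) (f : ℕ → ℕ → M) :
    ∑ p : Fin N × Fin N, (if p.1.val + p.2.val = i.val then f p.1 p.2 else 0) =
      ∑ p ∈ antidiagonal (i : ℕ), f p.1 p.2 := by
  rw [← Finset.sum_filter]
  refine Finset.sum_bij (fun p _ ↦ (p.1.val, p.2.val)) (by simp)
    (fun p _ q _ h ↦ ?_) (fun p hp ↦ ?_) (fun _ _ ↦ rfl)
  · simpa [Prod.ext_iff, Fin.ext_iff] using h
  · rw [Finset.HasAntidiagonal.mem_antidiagonal] at hp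
    exact ⟨(⟨p.1, by omega⟩, ⟨p.2, by omega⟩), by simpa using hp, rfl⟩

lemma posSemidef_coeffMatrix_mul {A B : ℝ⟦X⟧⟦X⟧} (hA : (coeffMatrix A).PosSemidef)
    (hB : (coeffMatrix B).PosSemidef) : (coeffMatrix (A * B)).PosSemidef := by
  refine posSemidef_iff_leadingSubmatrix.2 fun N ↦ ?_
  let T : Matrix (Fin N) (Fin N × Fin N) ℝ :=
    .of fun i p ↦ if p.1.val + p.2.val = i.val then 1 else 0
  have conv : leadingSubmatrix (coeffMatrix (A * B)) N =
      T * (leadingSubmatrix (coeffMatrix A) N ⊗ₖ leadingSubmatrix (coeffMatrix B) N) *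
        T.conjTranspose := by
    refine Matrix.ext fun i j ↦ ?_
    rw [leadingSubmatrix, Matrix.submatrix_apply, coeffMatrix_mul, Finset.sum_comm,
      ← sum_fin_prod_ite_add_eq j fun r s ↦
        ∑ p ∈ antidiagonal (i : ℕ), coeffMatrix A p.1 r * coeffMatrix B p.2 s]
    simp only [T, Matrix.mul_apply, Matrix.of_apply, Matrix.kroneckerMap_apply,
      Matrix.submatrix_apply, Matrix.conjTranspose_apply, apply_ite star, star_one, star_zero,
      ite_mul, mul_ite, one_mul, zero_mul, mul_one, mul_zero]
    exact Finset.sum_congr rfl fun s _ ↦ by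
      rw [sum_fin_prod_ite_add_eq i fun p q ↦ coeffMatrix A p s.1 * coeffMatrix B q s.2]
  rw [conv]
  exact ((hA.submatrix _).kronecker (hB.submatrix _)).mul_mul_conjTranspose_same T

/-- The kernels `∑ a i j x ^ i y ^ j` with `(a i j)` positive semidefinite. They are closed under
products because the matrix of a product is a compression of the Kronecker product. -/
def posSemidefKernels : Subsemiring ℝ⟦X⟧⟦X⟧ where
  carrier := {K | (coeffMatrix K).PosSemidef}
  mul_mem' := posSemidef_coeffMatrix_mul
  one_mem' := by
    have : coeffMatrix 1 = Matrix.diagonal (Pi.single 0 1) := by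
      ext i j
      rw [coeffMatrix_one, Matrix.diagonal_apply, Pi.single_apply]
      grind
    rw [Set.mem_ofPred_eq, this]
    exact .diagonal (Pi.single_nonneg.2 zero_le_one)
  add_mem' := .add
  zero_mem' := .zero

lemma mem_posSemidefKernels {K : ℝ⟦X⟧⟦X⟧} :
    K ∈ posSemidefKernels ↔ (coeffMatrix K).PosSemidef := Iff.rfl

lemma isClosed_posSemidefKernels : IsClosed (posSemidefKernels : Set ℝ⟦X⟧⟦X⟧) :=
  isClosed_setOf_posSemidef.preimage continuous_coeffMatrix

lemma exists_mem_posSemidefKernels_mul_one_sub_eq_one {A : ℝ⟦X⟧⟦X⟧} (hA : A ∈ posSemidefKernels)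
    (h₀ : constantCoeff A = 0) : ∃ B ∈ posSemidefKernels, B * (1 - A) = 1 := by
  have hsum := (WithPiTopology.summable_pow_of_constantCoeff_eq_zero h₀).hasSum
  exact ⟨_, isClosed_posSemidefKernels.mem_of_tendsto hsum <|
    .of_forall fun s ↦ sum_mem fun n _ ↦ pow_mem hA n,
    WithPiTopology.tsum_pow_mul_one_sub_of_constantCoeff_eq_zero h₀⟩

/-- The monomial `x y`. -/
def xy : ℝ⟦X⟧⟦X⟧ := X * C X

lemma coeffMatrix_xy_mul_succ (K : ℝ⟦X⟧⟦X⟧) (i j : ℕ) :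
    coeffMatrix (xy * K) (i + 1) (j + 1) = coeffMatrix K i j := by
  rw [xy, mul_assoc, coeffMatrix_apply, coeff_succ_X_mul, coeff_C_mul, coeff_succ_X_mul,
    coeffMatrix_apply]

lemma coeffMatrix_xy_mul_zero_left (K : ℝ⟦X⟧⟦X⟧) (j : ℕ) : coeffMatrix (xy * K) 0 j = 0 := by
  rw [xy, mul_assoc, coeffMatrix_apply, coeff_zero_X_mul, map_zero]

lemma coeffMatrix_xy_mul_zero_right (K : ℝ⟦X⟧⟦X⟧) (i : ℕ) : coeffMatrix (xy * K) i 0 = 0 := by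
  rw [xy, mul_comm X, mul_assoc, coeffMatrix_apply, coeff_C_mul, coeff_zero_X_mul]

lemma constantCoeff_xy_mul (K : ℝ⟦X⟧⟦X⟧) : constantCoeff (xy * K) = 0 := by
  simp [xy]

lemma xy_mem_posSemidefKernels : xy ∈ posSemidefKernels := by
  have : coeffMatrix xy = Matrix.diagonal (Pi.single 1 1) := by
    ext i j
    rw [← mul_one xy, Matrix.diagonal_apply, Pi.single_apply]
    rcases i with _ | i
    · rw [coeffMatrix_xy_mul_zero_left]
      simp
    rcases j with _ | j
    · rw [coeffMatrix_xy_mul_zero_right]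
      simp
    · rw [coeffMatrix_xy_mul_succ, coeffMatrix_one]
      grind
  rw [mem_posSemidefKernels, this]
  exact .diagonal (Pi.single_nonneg.2 zero_le_one)

lemma one_add_xy_mul_mem_posSemidefKernels_iff {K : ℝ⟦X⟧⟦X⟧} :
    1 + xy * K ∈ posSemidefKernels ↔ K ∈ posSemidefKernels := by
  refine ⟨fun h ↦ ?_, fun h ↦ add_mem (one_mem _) (mul_mem xy_mem_posSemidefKernels h)⟩
  have : coeffMatrix K = (coeffMatrix (1 + xy * K)).submatrix Nat.succ Nat.succ := by
    ext i j
    rw [Matrix.submatrix_apply, coeffMatrix_add, Matrix.add_apply, coeffMatrix_xy_mul_succ,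
      coeffMatrix_one, if_neg (by simp), zero_add]
  rw [mem_posSemidefKernels, this]
  exact h.submatrix _

/-- The substitution `(x, y) ↦ (c x, c y)`. -/
def rescaleXY (c : ℝ) : ℝ⟦X⟧⟦X⟧ →+* ℝ⟦X⟧⟦X⟧ :=
  (rescale (C c)).comp (PowerSeries.map (rescale c))

lemma coeffMatrix_rescaleXY (c : ℝ) (K : ℝ⟦X⟧⟦X⟧) (i j : ℕ) :
    coeffMatrix (rescaleXY c K) i j = c ^ i * c ^ j * coeffMatrix K i j := by
  simp [rescaleXY, coeffMatrix_apply, coeff_rescale, ← map_pow, mul_assoc]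

lemma rescaleXY_C (c : ℝ) (V : ℝ⟦X⟧) : rescaleXY c (C V) = C (rescale c V) := by
  ext i j
  rw [rescaleXY, RingHom.comp_apply, map_C, coeff_rescale, coeff_C]
  split_ifs with hi <;> simp [hi]

lemma rescaleXY_xy (c : ℝ) : rescaleXY c xy = C (C (c ^ 2)) * xy := by
  have rescaleXY_X : rescaleXY c X = C (C c) * X := by simp [rescaleXY, rescale_X]
  simp only [xy, map_mul, rescaleXY_X, rescaleXY_C, rescale_X, map_pow]
  ring

lemma rescaleXY_mem_posSemidefKernels {K : ℝ⟦X⟧⟦X⟧} (hK : K ∈ posSemidefKernels) (c : ℝ) :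
    rescaleXY c K ∈ posSemidefKernels := by
  refine posSemidef_iff_leadingSubmatrix.2 fun N ↦ ?_
  have conj : leadingSubmatrix (coeffMatrix (rescaleXY c K)) N =
      Matrix.diagonal (fun i : Fin N ↦ c ^ i.val) * leadingSubmatrix (coeffMatrix K) N *
        (Matrix.diagonal fun i : Fin N ↦ c ^ i.val).conjTranspose := by
    refine Matrix.ext fun i j ↦ ?_
    simp only [Matrix.submatrix_apply, coeffMatrix_rescaleXY, Matrix.diagonal_conjTranspose,
      Matrix.mul_diagonal, Matrix.diagonal_mul, star_trivial]
    ring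
  rw [conj]
  exact (hK.submatrix _).mul_mul_conjTranspose_same _

end PosSemidefKernels

section Resolvents

lemma coeff_eq_coeff_geom_sum {R : Type*} [CommRing R] {A B : R⟦X⟧} (h₀ : constantCoeff A = 0)
    (hB : B * (1 - A) = 1) (n : ℕ) :
    coeff n B = coeff n (∑ k ∈ Finset.range (n + 1), A ^ k) := by
  have expansion : B = ∑ k ∈ Finset.range (n + 1), A ^ k + A ^ (n + 1) * B := by
    linear_combination (∑ k ∈ Finset.range (n + 1), A ^ k) * hB - B * mul_neg_geom_sum A (n + 1)
  have tail : coeff n (A ^ (n + 1) * B) = 0 :=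
    X_pow_dvd_iff.1 ((pow_dvd_pow_of_dvd (X_dvd_iff.2 h₀) _).mul_right B) n n.lt_succ_self
  conv_lhs => rw [expansion]
  rw [map_add, tail, add_zero]

lemma tendsto_of_mul_one_sub_eq_one {R ι : Type*} [CommRing R] [TopologicalSpace R]
    [IsTopologicalRing R] {l : Filter ι} {A B : ι → R⟦X⟧} {A₀ B₀ : R⟦X⟧}
    (hA : Tendsto A l (nhds A₀)) (h₀ : ∀ i, constantCoeff (A i) = 0) (h₀' : constantCoeff A₀ = 0)
    (hB : ∀ i, B i * (1 - A i) = 1) (hB₀ : B₀ * (1 - A₀) = 1) : Tendsto B l (nhds B₀) := by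
  refine (WithPiTopology.tendsto_iff_coeff_tendsto R B l B₀).2 fun n ↦ ?_
  simp only [coeff_eq_coeff_geom_sum (h₀ _) (hB _), coeff_eq_coeff_geom_sum h₀' hB₀]
  exact ((WithPiTopology.continuous_coeff R n).tendsto _).comp <|
    tendsto_finsetSum _ fun k _ ↦ hA.pow k

/-- The resolvent `1 / (1 - x y H)` of the kernel `H` is positive semidefinite. For
`H = hankelKernel V` and for `H = hankelKernel V + 1` this is the algebraic content of `V ∈ 𝒱∞` and
of `V ∈ 𝒱` respectively. -/
def HasPosSemidefResolvent (H : ℝ⟦X⟧⟦X⟧) : Prop :=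
  ∃ P ∈ posSemidefKernels, P * (1 - xy * H) = 1

namespace HasPosSemidefResolvent

lemma one : HasPosSemidefResolvent 1 :=
  exists_mem_posSemidefKernels_mul_one_sub_eq_one (mul_mem xy_mem_posSemidefKernels (one_mem _))
    (constantCoeff_xy_mul 1)

/-- With `Sᵢ = 1 / (1 - x y Hᵢ)` and `Aᵢ = Sᵢ - 1 = x y Hᵢ Sᵢ`, the resolvent of `H₁ + H₂` is
`S₁ S₂ / (1 - A₁ A₂)`. -/
lemma add {H₁ H₂ : ℝ⟦X⟧⟦X⟧} (h₁ : HasPosSemidefResolvent H₁) (h₂ : HasPosSemidefResolvent H₂) :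
    HasPosSemidefResolvent (H₁ + H₂) := by
  obtain ⟨S₁, hS₁, eq₁⟩ := h₁
  obtain ⟨S₂, hS₂, eq₂⟩ := h₂
  have mem_of_resolvent {S H : ℝ⟦X⟧⟦X⟧} (hS : S ∈ posSemidefKernels) (eq : S * (1 - xy * H) = 1) :
      xy * (H * S) ∈ posSemidefKernels := by
    have : S = 1 + xy * (H * S) := by linear_combination eq
    exact mul_mem xy_mem_posSemidefKernels (one_add_xy_mul_mem_posSemidefKernels_iff.1 (this ▸ hS))
  obtain ⟨B, hB, eqB⟩ := exists_mem_posSemidefKernels_mul_one_sub_eq_one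
    (mul_mem (mem_of_resolvent hS₁ eq₁) (mem_of_resolvent hS₂ eq₂))
    (by rw [map_mul, constantCoeff_xy_mul, zero_mul])
  refine ⟨S₁ * S₂ * B, mul_mem (mul_mem hS₁ hS₂) hB, ?_⟩
  linear_combination eqB + B * eq₁ + B * (S₁ * (1 - xy * H₁)) * eq₂

lemma rescale {H : ℝ⟦X⟧⟦X⟧} (h : HasPosSemidefResolvent H) (c : ℝ) :
    HasPosSemidefResolvent (C (C (c ^ 2)) * rescaleXY c H) := by
  obtain ⟨P, hP, eq⟩ := h
  refine ⟨rescaleXY c P, rescaleXY_mem_posSemidefKernels hP c, ?_⟩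
  have := congrArg (rescaleXY c) eq
  rw [map_mul, map_sub, map_mul, map_one, rescaleXY_xy] at this
  linear_combination this

lemma of_tendsto {ι : Type*} {l : Filter ι} [l.NeBot] {H : ι → ℝ⟦X⟧⟦X⟧} {H₀ : ℝ⟦X⟧⟦X⟧}
    (hH : Tendsto H l (nhds H₀)) (h : ∀ i, HasPosSemidefResolvent (H i)) :
    HasPosSemidefResolvent H₀ := by
  choose P hP eq using h
  have h₀ := constantCoeff_xy_mul H₀
  refine ⟨_, isClosed_posSemidefKernels.mem_of_tendsto
    (tendsto_of_mul_one_sub_eq_one (hH.const_mul xy) (fun i ↦ constantCoeff_xy_mul (H i)) h₀ eq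
      (WithPiTopology.tsum_pow_mul_one_sub_of_constantCoeff_eq_zero h₀)) (.of_forall hP),
    WithPiTopology.tsum_pow_mul_one_sub_of_constantCoeff_eq_zero h₀⟩

end HasPosSemidefResolvent

/-- The kernel `H = ∑ v (i + j + 2) x ^ i y ^ j` attached to `V = ∑ v k X ^ k`. If `v 0 = 1`, it is
characterized by `(y - x) * (1 - x y H) = y * V(x) - x * V(y)`. -/
def hankelKernel (V : ℝ⟦X⟧) : ℝ⟦X⟧⟦X⟧ :=
  PowerSeries.mk fun i ↦ PowerSeries.mk fun j ↦ coeff (i + j + 2) V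

lemma coeffMatrix_hankelKernel (V : ℝ⟦X⟧) (i j : ℕ) :
    coeffMatrix (hankelKernel V) i j = coeff (i + j + 2) V := by
  rw [coeffMatrix_apply, hankelKernel, coeff_mk, coeff_mk]

lemma hankelKernel_add (V W : ℝ⟦X⟧) : hankelKernel (V + W) = hankelKernel V + hankelKernel W := by
  apply coeffMatrix_injective
  ext i j
  simp only [coeffMatrix_add, Matrix.add_apply, coeffMatrix_hankelKernel, map_add]

lemma hankelKernel_sub_one (V : ℝ⟦X⟧) : hankelKernel (V - 1) = hankelKernel V := by
  apply coeffMatrix_injective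
  ext i j
  simp [coeffMatrix_hankelKernel, coeff_one]

lemma hankelKernel_X_sq : hankelKernel (X ^ 2) = 1 := by
  apply coeffMatrix_injective
  ext i j
  rw [coeffMatrix_hankelKernel, coeff_X_pow, coeffMatrix_one]
  grind

lemma coeffMatrix_C_C_mul (a : ℝ) (K : ℝ⟦X⟧⟦X⟧) (i j : ℕ) :
    coeffMatrix (C (C a) * K) i j = a * coeffMatrix K i j := by
  simp only [coeffMatrix_apply, coeff_C_mul]

lemma hankelKernel_rescale (c : ℝ) (V : ℝ⟦X⟧) :
    hankelKernel (rescale c V) = C (C (c ^ 2)) * rescaleXY c (hankelKernel V) := by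
  apply coeffMatrix_injective
  ext i j
  rw [coeffMatrix_C_C_mul, coeffMatrix_rescaleXY, coeffMatrix_hankelKernel,
    coeffMatrix_hankelKernel, coeff_rescale]
  ring

lemma coeffMatrix_map_C (V : ℝ⟦X⟧) (i j : ℕ) :
    coeffMatrix (PowerSeries.map C V) i j = if j = 0 then coeff i V else 0 := by
  rw [coeffMatrix_apply, coeff_map, coeff_C]

lemma coeffMatrix_C (V : ℝ⟦X⟧) (i j : ℕ) :
    coeffMatrix (C V) i j = if i = 0 then coeff j V else 0 := by
  rw [coeffMatrix_apply, coeff_C]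
  split_ifs <;> simp

lemma C_X_sub_X_mul_one_sub_xy_mul_hankelKernel {V : ℝ⟦X⟧} (h : constantCoeff V = 1) :
    (C X - X) * (1 - xy * hankelKernel V) = C X * PowerSeries.map C V - X * C V := by
  rw [← coeff_zero_eq_constantCoeff_apply] at h
  let D : ℝ⟦X⟧⟦X⟧ := PowerSeries.mk fun i ↦ PowerSeries.mk fun j ↦ coeff (i + j + 1) V
  have X_mul_D : PowerSeries.map C V + xy * hankelKernel V = 1 + X * D := by
    apply coeffMatrix_injective
    ext i j
    simp only [coeffMatrix_add, Matrix.add_apply, coeffMatrix_one, coeffMatrix_map_C]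
    rcases i with _ | i <;> rcases j with _ | j
    · rw [coeffMatrix_xy_mul_zero_left, coeffMatrix_apply, coeff_zero_X_mul]
      simp [h]
    · rw [coeffMatrix_xy_mul_zero_left, coeffMatrix_apply, coeff_zero_X_mul]
      simp
    · rw [coeffMatrix_xy_mul_zero_right, coeffMatrix_apply, coeff_succ_X_mul]
      simp [D]
    · rw [coeffMatrix_xy_mul_succ, coeffMatrix_apply (X * D), coeff_succ_X_mul]
      simp [D, coeffMatrix_hankelKernel, add_assoc]
  have C_X_mul_D : C V + xy * hankelKernel V = 1 + C X * D := by
    apply coeffMatrix_injective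
    ext i j
    simp only [coeffMatrix_add, Matrix.add_apply, coeffMatrix_one, coeffMatrix_C]
    rcases i with _ | i <;> rcases j with _ | j
    · rw [coeffMatrix_xy_mul_zero_left, coeffMatrix_apply, coeff_C_mul, coeff_zero_X_mul]
      simp [h]
    · rw [coeffMatrix_xy_mul_zero_left, coeffMatrix_apply, coeff_C_mul, coeff_succ_X_mul]
      simp [D]
    · rw [coeffMatrix_xy_mul_zero_right, coeffMatrix_apply, coeff_C_mul, coeff_zero_X_mul]
      simp
    · rw [coeffMatrix_xy_mul_succ, coeffMatrix_apply (C X * D), coeff_C_mul, coeff_succ_X_mul]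
      simp [D, coeffMatrix_hankelKernel, add_right_comm]
  linear_combination X * C_X_mul_D - C X * X_mul_D

lemma hasPosSemidefResolvent_hankelKernel_iff {V : ℝ⟦X⟧} :
    HasPosSemidefResolvent (hankelKernel V) ↔
      ∀ c : ℝ, HasPosSemidefResolvent (hankelKernel (rescale c V) + 1) := by
  refine ⟨fun h c ↦ hankelKernel_rescale c V ▸ (h.rescale c).add .one, fun h ↦ ?_⟩
  have shifted (n : ℕ) : HasPosSemidefResolvent
      (hankelKernel V + C (C ((1 / ((n : ℝ) + 1)) ^ 2))) := by
    have := (h (n + 1)).rescale (1 / (n + 1))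
    rwa [map_add, map_one, mul_add, mul_one, ← hankelKernel_rescale, rescale_rescale,
      mul_one_div_cancel n.cast_add_one_ne_zero, rescale_one] at this
  refine .of_tendsto (l := atTop) ?_ shifted
  have lim := tendsto_one_div_add_atTop_nhds_zero_nat (𝕜 := ℝ).pow 2
  have cont : Continuous fun a : ℝ ↦ (C (C a) : ℝ⟦X⟧⟦X⟧) :=
    WithPiTopology.continuous_C.comp WithPiTopology.continuous_C
  simpa using ((cont.tendsto _).comp lim).const_add (hankelKernel V)

end Resolvents

section KernelPolynomials

open scoped Polynomial

/-- The generating series of the kernel polynomials: the expansion in `m = X` of the kernel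
`V(m) / (V(m) + m (m - x))`, where `x = C Polynomial.X` and `V` is a power series with constant
coefficient `1`. -/
def kernelSeries (V : ℝ⟦X⟧) : ℝ[X]⟦X⟧ :=
  PowerSeries.map Polynomial.C V *
    invOfUnit (PowerSeries.map Polynomial.C (V + X ^ 2) - X * C Polynomial.X) 1

/-- The coefficients `f k` in the expansion `∑ f k (x) m ^ k` of the Cauchy–Stieltjes kernel. -/
def kernelPoly (V : ℝ⟦X⟧) (k : ℕ) : ℝ[X] := coeff k (kernelSeries V)

lemma constantCoeff_map {R S : Type*} [CommRing R] [CommRing S] (f : R →+* S) (φ : R⟦X⟧) :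
    constantCoeff (PowerSeries.map f φ) = f (constantCoeff φ) := by
  simp only [← coeff_zero_eq_constantCoeff_apply, coeff_map]

variable {V : ℝ⟦X⟧}

lemma constantCoeff_add_X_sq (hV : constantCoeff V = 1) : constantCoeff (V + X ^ 2) = 1 := by
  rw [map_add, hV, map_pow, constantCoeff_X]
  norm_num

lemma map_C_mul_kernelSeries (hV : constantCoeff V = 1) :
    PowerSeries.map Polynomial.C (V + X ^ 2) * kernelSeries V =
      PowerSeries.map Polynomial.C V + X * (C Polynomial.X * kernelSeries V) := by
  have inv := mul_invOfUnit (PowerSeries.map Polynomial.C (V + X ^ 2) - X * C Polynomial.X) 1 <| by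
    rw [map_sub, constantCoeff_map, constantCoeff_add_X_sq hV, map_mul, constantCoeff_X]
    simp
  rw [kernelSeries]
  linear_combination PowerSeries.map Polynomial.C V * inv

lemma kernelPoly_zero (hV : constantCoeff V = 1) : kernelPoly V 0 = 1 := by
  simp [kernelPoly, kernelSeries, constantCoeff_map, hV]

lemma kernelPoly_succ (hV : constantCoeff V = 1) (k : ℕ) :
    kernelPoly V (k + 1) = Polynomial.X * kernelPoly V k + (Polynomial.C (coeff (k + 1) V) -
      ∑ p ∈ antidiagonal k, Polynomial.C (coeff (p.1 + 1) (V + X ^ 2)) * kernelPoly V p.2) := by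
  have := congrArg (coeff (k + 1)) (map_C_mul_kernelSeries hV)
  rw [map_add _ (PowerSeries.map _ _), coeff_mul, Finset.Nat.sum_antidiagonal_succ,
    coeff_succ_X_mul, coeff_C_mul] at this
  simp only [coeff_map, coeff_zero_eq_constantCoeff_apply, constantCoeff_add_X_sq hV, map_one,
    one_mul] at this
  simp only [kernelPoly]
  linear_combination this

lemma degree_kernelPoly (hV : constantCoeff V = 1) (k : ℕ) : (kernelPoly V k).degree = k := by
  induction k using Nat.strong_induction_on with
  | _ k ih => ?_
  rcases k with _ | k
  · simp [kernelPoly_zero hV]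
  · have lead : (Polynomial.X * kernelPoly V k).degree = ((k + 1 : ℕ) : WithBot ℕ) := by
      rw [Polynomial.degree_mul, Polynomial.degree_X, ih k k.lt_succ_self, add_comm, Nat.cast_succ]
    have correction_mem : Polynomial.C (coeff (k + 1) V) - ∑ p ∈ antidiagonal k,
        Polynomial.C (coeff (p.1 + 1) (V + X ^ 2)) * kernelPoly V p.2 ∈
        Polynomial.degreeLT ℝ (k + 1) := by
      refine sub_mem (Polynomial.mem_degreeLT.2 (Polynomial.degree_C_le.trans_lt ?_)) <|
        sum_mem fun p hp ↦ ?_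
      · exact_mod_cast k.succ_pos
      · have hp₂ : p.2 < k + 1 := Nat.lt_succ_of_le (Finset.HasAntidiagonal.antidiagonal.snd_le hp)
        rw [← Polynomial.smul_eq_C_mul]
        refine Submodule.smul_mem _ _ (Polynomial.mem_degreeLT.2 ?_)
        rw [ih p.2 hp₂]
        exact_mod_cast hp₂
    rw [kernelPoly_succ hV, Polynomial.degree_add_eq_left_of_degree_lt, lead]
    exact lead ▸ Polynomial.mem_degreeLT.1 correction_mem

/-- The basis of `ℝ[X]` formed by the kernel polynomials. -/
def kernelBasis (hV : constantCoeff V = 1) : Module.Basis ℕ ℝ ℝ[X] :=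
  Polynomial.Sequence.basis ⟨kernelPoly V, degree_kernelPoly hV⟩ fun i ↦
    (Polynomial.leadingCoeff_ne_zero.2 (Polynomial.Sequence.ne_zero _ i)).isUnit

lemma kernelBasis_apply (hV : constantCoeff V = 1) (k : ℕ) :
    kernelBasis hV k = kernelPoly V k :=
  Polynomial.Sequence.basis_eq_self _ _ k

/-- The linear functional that integrates polynomials against a measure generating `V`: it maps
`∑ f k m ^ k`, the Cauchy–Stieltjes kernel, to `1`. -/
def kernelFunctional (hV : constantCoeff V = 1) : ℝ[X] →ₗ[ℝ] ℝ := (kernelBasis hV).coord 0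

lemma kernelFunctional_kernelPoly (hV : constantCoeff V = 1) (k : ℕ) :
    kernelFunctional hV (kernelPoly V k) = if k = 0 then 1 else 0 := by
  rw [← kernelBasis_apply hV, kernelFunctional, Module.Basis.coord_apply, Module.Basis.repr_self,
    Finsupp.single_apply]

lemma eq_kernelFunctional (hV : constantCoeff V = 1) {L : ℝ[X] →ₗ[ℝ] ℝ}
    (hL : ∀ k, L (kernelPoly V k) = if k = 0 then 1 else 0) : L = kernelFunctional hV :=
  (kernelBasis hV).ext fun k ↦ by
    rw [kernelBasis_apply, hL, kernelFunctional_kernelPoly]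

lemma kernelPoly_one (hV : constantCoeff V = 1) : kernelPoly V 1 = Polynomial.X := by
  rw [kernelPoly_succ hV]
  simp [kernelPoly_zero hV, coeff_X_pow]

lemma X_mul_X_eq_kernelPoly (hV : constantCoeff V = 1) : (Polynomial.X * Polynomial.X : ℝ[X]) =
    kernelPoly V 2 + coeff 1 V • kernelPoly V 1 + kernelPoly V 0 := by
  rw [kernelPoly_succ hV 1, kernelPoly_one hV, kernelPoly_zero hV, Polynomial.smul_eq_C_mul,
    Finset.Nat.sum_antidiagonal_succ, Finset.Nat.antidiagonal_zero, Finset.sum_singleton,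
    kernelPoly_one hV, kernelPoly_zero hV]
  simp only [map_add, coeff_X_pow]
  norm_num
  ring

lemma kernelFunctional_one (hV : constantCoeff V = 1) : kernelFunctional hV 1 = 1 := by
  rw [← kernelPoly_zero hV, kernelFunctional_kernelPoly, if_pos rfl]

lemma kernelFunctional_X (hV : constantCoeff V = 1) : kernelFunctional hV Polynomial.X = 0 := by
  rw [← kernelPoly_one hV, kernelFunctional_kernelPoly, if_neg one_ne_zero]

lemma kernelFunctional_X_sq (hV : constantCoeff V = 1) :
    kernelFunctional hV (Polynomial.X ^ 2) = 1 := by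
  rw [sq, X_mul_X_eq_kernelPoly hV, map_add, map_add, map_smul]
  simp [kernelFunctional_kernelPoly]

lemma map_algebraMap_mul_mk_kernelPoly {A : Type*} [CommRing A] [Algebra ℝ A]
    (hV : constantCoeff V = 1) (M : ℝ[X] →ₗ[ℝ] A) :
    PowerSeries.map (algebraMap ℝ A) (V + X ^ 2) * PowerSeries.mk (fun k ↦ M (kernelPoly V k)) =
      PowerSeries.map (algebraMap ℝ A) V * C (M 1) +
        X * PowerSeries.mk (fun k ↦ M (Polynomial.X * kernelPoly V k)) := by
  have map_C_mul (a : ℝ) (p : ℝ[X]) : M (Polynomial.C a * p) = algebraMap ℝ A a * M p := by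
    rw [← Polynomial.smul_eq_C_mul, map_smul, Algebra.smul_def]
  have map_C (a : ℝ) : M (Polynomial.C a) = algebraMap ℝ A a * M 1 := by
    rw [← map_C_mul, mul_one]
  ext k
  have := congrArg M (congrArg (coeff k) (map_C_mul_kernelSeries hV))
  rw [map_add (coeff k), map_add M, coeff_mul, map_sum] at this
  simp only [coeff_map, map_C_mul, map_C] at this
  rw [map_add (coeff k), coeff_mul, coeff_mul_C, coeff_map]
  simp only [coeff_map, coeff_mk]
  refine this.trans (congrArg (algebraMap ℝ A (coeff k V) * M 1 + ·) ?_)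
  rcases k with _ | k
  · rw [coeff_zero_X_mul, coeff_zero_X_mul, map_zero]
  · rw [coeff_succ_X_mul, coeff_succ_X_mul, coeff_C_mul, coeff_mk, kernelPoly]

/-- The generating series `∑ L (p * f k) X ^ k` of the moments of `p` against the kernel
polynomials. -/
def kernelMoments (V : ℝ⟦X⟧) (L : ℝ[X] →ₗ[ℝ] ℝ) : ℝ[X] →ₗ[ℝ] ℝ⟦X⟧ where
  toFun p := PowerSeries.mk fun k ↦ L (p * kernelPoly V k)
  map_add' p q := by
    ext k
    simp [add_mul]
  map_smul' a p := by
    ext k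
    simp

lemma coeff_kernelMoments (L : ℝ[X] →ₗ[ℝ] ℝ) (p : ℝ[X]) (k : ℕ) :
    coeff k (kernelMoments V L p) = L (p * kernelPoly V k) :=
  coeff_mk k fun k ↦ L (p * kernelPoly V k)

lemma mul_kernelMoments (hV : constantCoeff V = 1) (L : ℝ[X] →ₗ[ℝ] ℝ) (p : ℝ[X]) :
    (V + X ^ 2) * kernelMoments V L p =
      V * C (L p) + X * kernelMoments V L (Polynomial.X * p) := by
  simpa [kernelMoments, mul_left_comm, mul_assoc] using
    map_algebraMap_mul_mk_kernelPoly hV (L ∘ₗ LinearMap.mulLeft ℝ p)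

lemma kernelMoments_one (hV : constantCoeff V = 1) :
    kernelMoments V (kernelFunctional hV) 1 = 1 := by
  ext k
  rw [coeff_kernelMoments, one_mul, kernelFunctional_kernelPoly, coeff_one]

/-- The generating kernel `∑ L (f i * f j) x ^ i y ^ j` of the Gram matrix of the kernel
polynomials. -/
def kernelGram (V : ℝ⟦X⟧) (L : ℝ[X] →ₗ[ℝ] ℝ) : ℝ⟦X⟧⟦X⟧ :=
  PowerSeries.mk fun i ↦ kernelMoments V L (kernelPoly V i)

lemma kernelGram_mul_one_sub (hV : constantCoeff V = 1) :
    kernelGram V (kernelFunctional hV) * (1 - xy * (hankelKernel V + 1)) =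
      1 - xy * hankelKernel V := by
  set E := kernelGram V (kernelFunctional hV) with hE
  let Z : ℝ⟦X⟧⟦X⟧ := PowerSeries.mk fun i ↦
    kernelMoments V (kernelFunctional hV) (Polynomial.X * kernelPoly V i)
  have eq_x : PowerSeries.map C (V + X ^ 2) * E = PowerSeries.map C V + X * Z := by
    have := map_algebraMap_mul_mk_kernelPoly hV (kernelMoments V (kernelFunctional hV))
    rwa [kernelMoments_one, map_one, mul_one] at this
  have eq_y : C (V + X ^ 2) * E = C V + C X * Z := by
    ext1 i
    rw [map_add (coeff i), coeff_C_mul, coeff_C_mul, hE, kernelGram, coeff_mk, coeff_mk,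
      mul_kernelMoments hV, kernelFunctional_kernelPoly, coeff_C]
    split_ifs <;> simp
  have hankel := C_X_sub_X_mul_one_sub_xy_mul_hankelKernel hV
  have hankel' := C_X_sub_X_mul_one_sub_xy_mul_hankelKernel (constantCoeff_add_X_sq hV)
  rw [hankelKernel_add, hankelKernel_X_sq] at hankel'
  have sub_ne_zero : (C X - X : ℝ⟦X⟧⟦X⟧) ≠ 0 := fun h ↦ by
    simpa [coeff_X, coeff_C] using congrArg (fun φ ↦ coeff 1 (coeff 0 φ)) h
  refine mul_left_cancel₀ sub_ne_zero ?_
  linear_combination E * hankel' + C X * eq_x - X * eq_y - hankel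

/-- If `P` is the resolvent of `hankelKernel V + 1`, the Gram kernel is `1 + x y P`. -/
lemma kernelGram_mem_posSemidefKernels_iff (hV : constantCoeff V = 1) :
    kernelGram V (kernelFunctional hV) ∈ posSemidefKernels ↔
      HasPosSemidefResolvent (hankelKernel V + 1) := by
  have kernelGram_eq {P : ℝ⟦X⟧⟦X⟧} (hP : P * (1 - xy * (hankelKernel V + 1)) = 1) :
      kernelGram V (kernelFunctional hV) = 1 + xy * P := by
    linear_combination P * kernelGram_mul_one_sub hV -
      (kernelGram V (kernelFunctional hV) - 1) * hP
  have hP := WithPiTopology.tsum_pow_mul_one_sub_of_constantCoeff_eq_zero <|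
    constantCoeff_xy_mul (hankelKernel V + 1)
  refine ⟨fun h ↦ ⟨_, ?_, hP⟩, fun ⟨P, hmem, hP⟩ ↦ ?_⟩
  · rwa [kernelGram_eq hP, one_add_xy_mul_mem_posSemidefKernels_iff] at h
  · rwa [kernelGram_eq hP, one_add_xy_mul_mem_posSemidefKernels_iff]

lemma forall_mul_self_nonneg_iff_posSemidef {A ι : Type*} [CommRing A] [Algebra ℝ A]
    (b : Module.Basis ι ℝ A) (L : A →ₗ[ℝ] ℝ) :
    (∀ a, 0 ≤ L (a * a)) ↔ (Matrix.of fun i j ↦ L (b i * b j)).PosSemidef := by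
  have quadratic (x : ι →₀ ℝ) : L (b.repr.symm x * b.repr.symm x) =
      x.sum fun i xi ↦ x.sum fun j xj ↦ star xi * Matrix.of (fun i j ↦ L (b i * b j)) i j * xj := by
    rw [Module.Basis.repr_symm_apply, Finsupp.linearCombination_apply, Finsupp.sum_mul,
      map_finsuppSum]
    simp only [Finsupp.mul_sum, map_finsuppSum, smul_mul_smul_comm, map_smul, smul_eq_mul,
      star_trivial, Matrix.of_apply, mul_right_comm]
  refine ⟨fun h ↦ ⟨?_, fun x ↦ quadratic x ▸ h _⟩, fun h a ↦ ?_⟩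
  · ext i j
    simp [mul_comm]
  · rw [← b.repr.symm_apply_apply a, quadratic]
    exact h.2 _

lemma kernelFunctional_mul_self_nonneg_iff (hV : constantCoeff V = 1) :
    (∀ p, 0 ≤ kernelFunctional hV (p * p)) ↔ HasPosSemidefResolvent (hankelKernel V + 1) := by
  rw [← kernelGram_mem_posSemidefKernels_iff hV,
    forall_mul_self_nonneg_iff_posSemidef (kernelBasis hV), mem_posSemidefKernels]
  simp only [kernelBasis_apply]
  refine iff_of_eq (congrArg Matrix.PosSemidef (Matrix.ext fun i j ↦ ?_))
  rw [Matrix.of_apply, coeffMatrix_apply, kernelGram, coeff_mk, coeff_kernelMoments]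

end KernelPolynomials

section GrowthOfKernelPolynomials

open scoped Polynomial

lemma sum_antidiagonal_half_pow_mul_pow_le {ρ : ℝ} (hρ : 0 ≤ ρ) (k : ℕ) :
    ∑ p ∈ antidiagonal k, (ρ / 2) ^ p.1 * ρ ^ p.2 ≤ 2 * ρ ^ k := by
  calc ∑ p ∈ antidiagonal k, (ρ / 2) ^ p.1 * ρ ^ p.2
      = ∑ p ∈ antidiagonal k, (1 / 2) ^ p.1 * ρ ^ k := by
        refine Finset.sum_congr rfl fun p hp ↦ ?_
        rw [← Finset.HasAntidiagonal.mem_antidiagonal.1 hp]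
        ring
    _ ≤ 2 * ρ ^ k := by
        rw [← Finset.sum_mul, Finset.Nat.sum_antidiagonal_eq_sum_range_succ_mk]
        gcongr
        exact sum_geometric_two_le _

variable {V : ℝ⟦X⟧} {B ρ : ℝ}

lemma abs_map_X_mul_kernelPoly_sub_le (hV : constantCoeff V = 1) (hρ : 0 ≤ ρ)
    (hVB : ∀ k, |coeff (k + 1) V| + 1 ≤ B * (ρ / 2) ^ k) {N : ℝ}
    {M : ℝ[X] →ₗ[ℝ] ℝ} {k : ℕ} (hM : ∀ q ≤ k, |M (kernelPoly V q)| ≤ N * ρ ^ q) :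
    |M (Polynomial.X * kernelPoly V k - kernelPoly V (k + 1))| ≤ 3 * B * N * ρ ^ k := by
  have hB : 0 ≤ B := by simpa using (add_nonneg (abs_nonneg _) zero_le_one).trans (hVB 0)
  have hVXB (k : ℕ) : |coeff (k + 1) (V + X ^ 2)| ≤ B * (ρ / 2) ^ k := by
    refine le_trans ?_ (hVB k)
    rw [map_add, coeff_X_pow]
    refine (abs_add_le _ _).trans (add_le_add_right ?_ _)
    split_ifs <;> simp
  have hN : 0 ≤ N := by simpa using (abs_nonneg _).trans (hM 0 k.zero_le)
  have eq : Polynomial.X * kernelPoly V k - kernelPoly V (k + 1) =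
      ∑ p ∈ antidiagonal k, coeff (p.1 + 1) (V + X ^ 2) • kernelPoly V p.2 -
        coeff (k + 1) V • kernelPoly V 0 := by
    simp only [kernelPoly_succ hV, kernelPoly_zero hV, Polynomial.smul_eq_C_mul, mul_one]
    ring
  have sum_le : ∑ p ∈ antidiagonal k, |coeff (p.1 + 1) (V + X ^ 2)| * |M (kernelPoly V p.2)| ≤
      B * N * (2 * ρ ^ k) := calc
    _ ≤ ∑ p ∈ antidiagonal k, B * (ρ / 2) ^ p.1 * (N * ρ ^ p.2) := by
      refine Finset.sum_le_sum fun p hp ↦ ?_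
      gcongr
      · exact hVXB _
      · exact hM _ (Finset.HasAntidiagonal.antidiagonal.snd_le hp)
    _ = B * N * ∑ p ∈ antidiagonal k, (ρ / 2) ^ p.1 * ρ ^ p.2 := by
      rw [Finset.mul_sum]
      exact Finset.sum_congr rfl fun p _ ↦ by ring
    _ ≤ B * N * (2 * ρ ^ k) := by
      gcongr
      exact sum_antidiagonal_half_pow_mul_pow_le hρ k
  have last_le : |coeff (k + 1) V| * |M (kernelPoly V 0)| ≤ B * ρ ^ k * N := by
    refine mul_le_mul ?_ (by simpa using hM 0 k.zero_le) (abs_nonneg _) (by positivity)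
    refine ((le_add_of_nonneg_right zero_le_one).trans (hVB k)).trans ?_
    gcongr
    exact half_le_self hρ
  simp only [eq, map_sub, map_sum, map_smul, smul_eq_mul]
  calc _ ≤ ∑ p ∈ antidiagonal k, |coeff (p.1 + 1) (V + X ^ 2)| * |M (kernelPoly V p.2)| +
        |coeff (k + 1) V| * |M (kernelPoly V 0)| := by
        refine (abs_sub _ _).trans (add_le_add ?_ (abs_mul _ _).le)
        simpa only [abs_mul] using Finset.abs_sum_le_sum_abs
          (fun p : ℕ × ℕ ↦ coeff (p.1 + 1) (V + X ^ 2) * M (kernelPoly V p.2)) (antidiagonal k)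
    _ ≤ 3 * B * N * ρ ^ k := by linarith

lemma abs_eval_kernelPoly_le (hV : constantCoeff V = 1) (hρ : 0 ≤ ρ)
    (hVB : ∀ k, |coeff (k + 1) V| + 1 ≤ B * (ρ / 2) ^ k) {x : ℝ}
    (hx : |x| + 3 * B ≤ ρ) (k : ℕ) : |(kernelPoly V k).eval x| ≤ ρ ^ k := by
  induction k using Nat.strong_induction_on with
  | _ k ih => ?_
  rcases k with _ | k
  · simp [kernelPoly_zero hV]
  have step := abs_map_X_mul_kernelPoly_sub_le hV hρ hVB (N := 1)
    (M := Polynomial.leval x) fun q hq ↦ by simpa using ih q (Nat.lt_succ_of_le hq)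
  simp only [map_sub, Polynomial.leval_apply, Polynomial.eval_mul, Polynomial.eval_X] at step
  calc |(kernelPoly V (k + 1)).eval x|
      ≤ |x * (kernelPoly V k).eval x| +
        |x * (kernelPoly V k).eval x - (kernelPoly V (k + 1)).eval x| := by
        rw [← sub_le_iff_le_add', abs_sub_comm]
        exact abs_sub_abs_le_abs_sub _ _
    _ ≤ |x| * ρ ^ k + 3 * B * 1 * ρ ^ k := by
        rw [abs_mul]
        gcongr
        exact ih k k.lt_succ_self
    _ = (|x| + 3 * B) * ρ ^ k := by ring
    _ ≤ ρ ^ (k + 1) := by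
        rw [pow_succ']
        gcongr

lemma abs_kernelFunctional_X_pow_mul_kernelPoly_le (hV : constantCoeff V = 1) (hρ : 0 ≤ ρ)
    (hVB : ∀ k, |coeff (k + 1) V| + 1 ≤ B * (ρ / 2) ^ k) (n k : ℕ) :
    |kernelFunctional hV (Polynomial.X ^ n * kernelPoly V k)| ≤ (ρ + 3 * B) ^ n * ρ ^ k := by
  induction n generalizing k with
  | zero =>
    rw [pow_zero, one_mul, kernelFunctional_kernelPoly]
    split_ifs with hk
    · simp [hk]
    · simpa using pow_nonneg hρ k
  | succ n ih =>
    let M := kernelFunctional hV ∘ₗ LinearMap.mulLeft ℝ (Polynomial.X ^ n)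
    have step : |M (Polynomial.X * kernelPoly V k - kernelPoly V (k + 1))| ≤ _ :=
      abs_map_X_mul_kernelPoly_sub_le hV hρ hVB fun q _ ↦ ih q
    calc |kernelFunctional hV (Polynomial.X ^ (n + 1) * kernelPoly V k)|
        = |M (Polynomial.X * kernelPoly V k - kernelPoly V (k + 1)) +
            M (kernelPoly V (k + 1))| := by
          rw [← map_add, sub_add_cancel, pow_succ, mul_assoc]
          rfl
      _ ≤ 3 * B * (ρ + 3 * B) ^ n * ρ ^ k + (ρ + 3 * B) ^ n * ρ ^ (k + 1) :=
          (abs_add_le _ _).trans (add_le_add step (ih (k + 1)))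
      _ = (ρ + 3 * B) ^ (n + 1) * ρ ^ k := by ring

end GrowthOfKernelPolynomials

section TaylorSeries

/-- The power series `a` converges at the point `m` with sum `s`. -/
def HasSumAt (a : ℝ⟦X⟧) (m s : ℝ) : Prop := HasSum (fun k ↦ coeff k a * m ^ k) s

section HasSumAt

variable {a b : ℝ⟦X⟧} {m s t : ℝ}

lemma HasSumAt.add (ha : HasSumAt a m s) (hb : HasSumAt b m t) : HasSumAt (a + b) m (s + t) := by
  simpa only [HasSumAt, map_add, add_mul] using HasSum.add ha hb

lemma HasSumAt.sub (ha : HasSumAt a m s) (hb : HasSumAt b m t) : HasSumAt (a - b) m (s - t) := by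
  simpa only [HasSumAt, map_sub, sub_mul] using HasSum.sub ha hb

lemma HasSumAt.mul (ha : HasSumAt a m s) (hb : HasSumAt b m t) : HasSumAt (a * b) m (s * t) := by
  have coeff_mul_pow (k : ℕ) : coeff k (a * b) * m ^ k =
      ∑ p ∈ antidiagonal k, coeff p.1 a * m ^ p.1 * (coeff p.2 b * m ^ p.2) := by
    rw [coeff_mul, Finset.sum_mul]
    refine Finset.sum_congr rfl fun p hp ↦ ?_
    rw [← Finset.HasAntidiagonal.mem_antidiagonal.1 hp]
    ring
  have hs := summable_norm_sum_mul_antidiagonal_of_summable_norm ha.summable.norm hb.summable.norm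
  have htsum := tsum_mul_tsum_eq_tsum_sum_antidiagonal_of_summable_norm
    ha.summable.norm hb.summable.norm
  rw [ha.tsum_eq, hb.tsum_eq] at htsum
  simpa only [HasSumAt, coeff_mul_pow, htsum] using hs.of_norm.hasSum

lemma hasSumAt_C (c m : ℝ) : HasSumAt (C c) m c := by
  have := hasSum_single (f := fun k ↦ coeff k (C c) * m ^ k) 0 fun k hk ↦ by simp [coeff_C, hk]
  simpa [HasSumAt] using this

lemma hasSumAt_X (m : ℝ) : HasSumAt X m m := by
  have := hasSum_single (f := fun k ↦ coeff k X * m ^ k) 1 fun k hk ↦ by simp [coeff_X, hk]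
  simpa [HasSumAt] using this

lemma hasSumAt_rescale {c : ℝ} : HasSumAt (rescale c a) m s ↔ HasSumAt a (c * m) s := by
  simp only [HasSumAt, coeff_rescale, mul_pow, mul_left_comm, mul_assoc]

end HasSumAt

/-- `v` is the Taylor series at `0` of a function `V` that is analytic there. -/
def IsTaylorSeries (v : ℝ⟦X⟧) (V : ℝ → ℝ) : Prop := ∀ᶠ m in nhds 0, HasSumAt v m (V m)

section IsTaylorSeries

variable {V W : ℝ → ℝ} {v w : ℝ⟦X⟧}

lemma isTaylorSeries_iff_hasFPowerSeriesAt : IsTaylorSeries v V ↔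
    HasFPowerSeriesAt V (FormalMultilinearSeries.ofScalars ℝ fun k ↦ coeff k v) 0 := by
  simp only [hasFPowerSeriesAt_iff, IsTaylorSeries, HasSumAt, zero_add,
    FormalMultilinearSeries.coeff_ofScalars, smul_eq_mul, mul_comm]

lemma exists_isTaylorSeries (h : AnalyticAt ℝ V 0) : ∃ v, IsTaylorSeries v V := by
  obtain ⟨p, hp⟩ := h
  refine ⟨PowerSeries.mk p.coeff, ?_⟩
  simpa only [IsTaylorSeries, HasSumAt, coeff_mk, hasFPowerSeriesAt_iff, zero_add, smul_eq_mul,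
    mul_comm] using hp

lemma IsTaylorSeries.analyticAt (h : IsTaylorSeries v V) : AnalyticAt ℝ V 0 :=
  ⟨_, isTaylorSeries_iff_hasFPowerSeriesAt.1 h⟩

lemma IsTaylorSeries.unique (hv : IsTaylorSeries v V) (hw : IsTaylorSeries w V) : v = w := by
  have := (isTaylorSeries_iff_hasFPowerSeriesAt.1 hv).eq_formalMultilinearSeries
    (isTaylorSeries_iff_hasFPowerSeriesAt.1 hw)
  ext k
  simpa only [FormalMultilinearSeries.coeff_ofScalars] using congrArg (·.coeff k) this

lemma isTaylorSeries_one : IsTaylorSeries 1 fun _ ↦ 1 :=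
  .of_forall fun m ↦ by simpa using hasSumAt_C 1 m

lemma IsTaylorSeries.constantCoeff_eq (h : IsTaylorSeries v V) : constantCoeff v = V 0 := by
  have := (isTaylorSeries_iff_hasFPowerSeriesAt.1 h).coeff_zero fun _ ↦ 0
  simpa [FormalMultilinearSeries.ofScalars] using this

lemma IsTaylorSeries.add (hv : IsTaylorSeries v V) (hw : IsTaylorSeries w W) :
    IsTaylorSeries (v + w) fun m ↦ V m + W m :=
  hv.and hw |>.mono fun _ h ↦ h.1.add h.2

lemma IsTaylorSeries.sub (hv : IsTaylorSeries v V) (hw : IsTaylorSeries w W) :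
    IsTaylorSeries (v - w) fun m ↦ V m - W m :=
  hv.and hw |>.mono fun _ h ↦ h.1.sub h.2

lemma IsTaylorSeries.rescale (h : IsTaylorSeries v V) (c : ℝ) :
    IsTaylorSeries (rescale c v) fun m ↦ V (c * m) := by
  have : Tendsto (fun m : ℝ ↦ c * m) (nhds 0) (nhds 0) := by
    simpa using (continuous_const_mul c).tendsto 0
  exact (this.eventually h).mono fun _ ↦ hasSumAt_rescale.2

lemma IsTaylorSeries.exists_eventually_abs_coeff_succ_add_one_le (h : IsTaylorSeries v V) :
    ∃ B, ∀ᶠ ρ in atTop, ∀ k, |coeff (k + 1) v| + 1 ≤ B * (ρ / 2) ^ k := by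
  obtain ⟨A, r, hA, hr, hbound⟩ := FormalMultilinearSeries.le_mul_pow_of_radius_pos _
    (isTaylorSeries_iff_hasFPowerSeriesAt.1 h).radius_pos
  simp only [FormalMultilinearSeries.norm_apply_eq_norm_coef,
    FormalMultilinearSeries.coeff_ofScalars, Real.norm_eq_abs] at hbound
  refine ⟨A * max 1 r + 1, ?_⟩
  filter_upwards [eventually_ge_atTop (2 * max 1 r)] with ρ hρ k
  calc |coeff (k + 1) v| + 1 ≤ A * max 1 r ^ (k + 1) + max 1 r ^ k := by
        refine add_le_add ((hbound _).trans ?_) (one_le_pow₀ (le_max_left 1 r))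
        gcongr
        exact le_max_right 1 r
    _ = (A * max 1 r + 1) * max 1 r ^ k := by ring
    _ ≤ (A * max 1 r + 1) * (ρ / 2) ^ k := by
        gcongr
        linarith

end IsTaylorSeries

end TaylorSeries

section KernelExpansion

open scoped Polynomial

variable {V : ℝ → ℝ} {v : ℝ⟦X⟧} {m x R : ℝ}

lemma cskKernel_mul (h : V m + m * (m - x) ≠ 0) : cskKernel V m x * (V m + m * (m - x)) = V m :=
  div_mul_cancel₀ _ h

lemma HasSumAt.eval_kernelPoly (hv : constantCoeff v = 1) (hm : HasSumAt v m (V m))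
    (h : V m + m * (m - x) ≠ 0) (hsum : Summable fun k ↦ (kernelPoly v k).eval x * m ^ k) :
    HasSum (fun k ↦ (kernelPoly v k).eval x * m ^ k) (cskKernel V m x) := by
  obtain ⟨s, hs⟩ := hsum
  let F := PowerSeries.map (Polynomial.evalRingHom x) (kernelSeries v)
  have hF : HasSumAt F m s := hs
  have map_map_C (a : ℝ⟦X⟧) :
      PowerSeries.map (Polynomial.evalRingHom x) (PowerSeries.map Polynomial.C a) = a := by
    ext
    simp
  have series_eq : (v + X * X) * F = v + X * (C x * F) := by
    have := congrArg (PowerSeries.map (Polynomial.evalRingHom x)) (map_C_mul_kernelSeries hv)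
    simpa only [map_mul, map_add (PowerSeries.map (Polynomial.evalRingHom x)), map_map_C, map_X,
      PowerSeries.map_C, Polynomial.coe_evalRingHom, Polynomial.eval_X, sq] using this
  have sum_eq : (V m + m * m) * s = V m + m * (x * s) :=
    ((hm.add ((hasSumAt_X m).mul (hasSumAt_X m))).mul hF).unique <|
      series_eq ▸ hm.add ((hasSumAt_X m).mul ((hasSumAt_C x m).mul hF))
  have : cskKernel V m x = s := mul_right_cancel₀ h <| by
    rw [cskKernel_mul h]
    linear_combination -sum_eq
  exact this ▸ hs

lemma IsTaylorSeries.exists_abs_eval_kernelPoly_le (hV : IsTaylorSeries v V)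
    (hv : constantCoeff v = 1) (R : ℝ) :
    ∃ ρ, 0 ≤ ρ ∧ ∀ x, |x| ≤ R → ∀ k, |(kernelPoly v k).eval x| ≤ ρ ^ k := by
  obtain ⟨B, hB⟩ := hV.exists_eventually_abs_coeff_succ_add_one_le
  obtain ⟨ρ, hρB, hρ, hρR⟩ :=
    (hB.and ((eventually_ge_atTop 0).and (eventually_ge_atTop (R + 3 * B)))).exists
  exact ⟨ρ, hρ, fun x hx ↦ abs_eval_kernelPoly_le hv hρ hρB (by linarith)⟩

lemma eventually_pos_and_le_two_mul (hV : ContinuousAt V 0) (hV₀ : 0 < V 0) (R : ℝ) :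
    ∀ᶠ m in nhds 0, 0 < V m ∧ ∀ x, |x| ≤ R → V m ≤ 2 * (V m + m * (m - x)) := by
  have : ContinuousAt (fun m ↦ V m - 2 * (|m| * |R|)) 0 := by fun_prop
  filter_upwards [this.eventually (lt_mem_nhds (by simpa using hV₀))] with m hm
  refine ⟨by linarith [mul_nonneg (abs_nonneg m) (abs_nonneg R)], fun x hx ↦ ?_⟩
  have : m * x ≤ |m| * |R| := (le_abs_self _).trans <| by
    rw [abs_mul]
    exact mul_le_mul_of_nonneg_left (hx.trans (le_abs_self R)) (abs_nonneg m)
  linarith [mul_self_nonneg m]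

lemma measurable_cskKernel (V : ℝ → ℝ) (m : ℝ) : Measurable (cskKernel V m) := by
  unfold cskKernel
  fun_prop

variable {ν : Measure ℝ}

lemma eventually_ae_abs_cskKernel_le_two (hV : ContinuousAt V 0) (hV₀ : 0 < V 0)
    (hν : ∀ᵐ x ∂ν, |x| ≤ R) : ∀ᶠ m in nhds 0, 0 < V m ∧
      (∀ᵐ x ∂ν, 0 < V m + m * (m - x)) ∧ ∀ᵐ x ∂ν, |cskKernel V m x| ≤ 2 := by
  filter_upwards [eventually_pos_and_le_two_mul hV hV₀ R] with m ⟨hVm, h⟩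
  have pos : ∀ᵐ x ∂ν, 0 < V m + m * (m - x) := hν.mono fun x hx ↦ by linarith [h x hx]
  refine ⟨hVm, pos, ?_⟩
  filter_upwards [hν, pos] with x hx hpos
  rw [cskKernel, abs_of_pos (div_pos hVm hpos), div_le_iff₀ hpos]
  exact h x hx

lemma integrable_mul_cskKernel {f : ℝ → ℝ} (hf : Integrable f ν)
    (h : ∀ᵐ x ∂ν, |cskKernel V m x| ≤ 2) : Integrable (fun x ↦ f x * cskKernel V m x) ν :=
  hf.mul_bdd (measurable_cskKernel V m).aestronglyMeasurable h

lemma integral_mul_mul_cskKernel {f : ℝ → ℝ} (hden : ∀ᵐ x ∂ν, V m + m * (m - x) ≠ 0)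
    (hm : m ≠ 0) (hf : Integrable f ν) (hfk : Integrable (fun x ↦ f x * cskKernel V m x) ν) :
    ∫ x, x * (f x * cskKernel V m x) ∂ν =
      m⁻¹ * ((V m + m ^ 2) * ∫ x, f x * cskKernel V m x ∂ν - V m * ∫ x, f x ∂ν) := by
  have kernel_eq : ∀ᵐ x ∂ν, x * (f x * cskKernel V m x) =
      m⁻¹ * ((V m + m ^ 2) * (f x * cskKernel V m x) - V m * f x) := hden.mono fun x hx ↦ by
    rw [eq_inv_mul_iff_mul_eq₀ hm]
    linear_combination -f x * cskKernel_mul hx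
  rw [integral_congr_ae kernel_eq, integral_const_mul,
    integral_sub (hfk.const_mul _) (hf.const_mul _), integral_const_mul, integral_const_mul]

variable [IsFiniteMeasure ν]

lemma integrable_of_continuous_of_ae_abs_le {f : ℝ → ℝ} (hf : Continuous f)
    (hν : ∀ᵐ x ∂ν, |x| ≤ R) : Integrable f ν := by
  obtain ⟨M, hM⟩ := (isCompact_Icc (a := -R) (b := R)).exists_bound_of_continuousOn hf.continuousOn
  exact .of_bound hf.aestronglyMeasurable M (hν.mono fun x hx ↦ hM x (abs_le.1 hx))

lemma IsTaylorSeries.integral_cskKernel (hV : IsTaylorSeries v V) (hv : constantCoeff v = 1)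
    (hν : ∀ᵐ x ∂ν, |x| ≤ R) :
    IsTaylorSeries (PowerSeries.mk fun k ↦ ∫ x, (kernelPoly v k).eval x ∂ν)
      fun m ↦ ∫ x, cskKernel V m x ∂ν := by
  obtain ⟨ρ, hρ₀, hρ⟩ := hV.exists_abs_eval_kernelPoly_le hv R
  have small : ∀ᶠ m in nhds (0 : ℝ), ρ * |m| < 1 := by
    have : Continuous fun m ↦ ρ * |m| := by fun_prop
    exact this.continuousAt.eventually (gt_mem_nhds (by simp))
  have pos : 0 < V 0 := by rw [← hV.constantCoeff_eq, hv]; exact one_pos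
  filter_upwards [hV, small, eventually_ae_abs_cskKernel_le_two hV.analyticAt.continuousAt pos hν]
    with m hm hρm ⟨_, hden, _⟩
  have geometric := summable_geometric_of_lt_one (mul_nonneg hρ₀ (abs_nonneg m)) hρm
  have term_le {x : ℝ} (hx : |x| ≤ R) (k : ℕ) :
      ‖(kernelPoly v k).eval x * m ^ k‖ ≤ (ρ * |m|) ^ k := by
    rw [norm_mul, norm_pow, mul_pow]
    exact mul_le_mul_of_nonneg_right (hρ x hx k) (by positivity)
  have := hasSum_integral_of_dominated_convergence (fun k _ ↦ (ρ * |m|) ^ k)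
    (F := fun k x ↦ (kernelPoly v k).eval x * m ^ k) (f := cskKernel V m) (μ := ν)
    (fun k ↦ ((kernelPoly v k).continuous.mul_const _).aestronglyMeasurable)
    (fun k ↦ hν.mono fun x hx ↦ term_le hx k) (.of_forall fun _ ↦ geometric)
    (integrable_const _) ?_
  · simpa only [HasSumAt, coeff_mk, integral_mul_const] using this
  · filter_upwards [hν, hden] with x hx hpos
    exact hm.eval_kernelPoly hv hpos.ne' (geometric.of_norm_bounded (term_le hx))

lemma tendsto_integral_mul_cskKernel {f : ℝ → ℝ} (hf : Continuous f) (hV : ContinuousAt V 0)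
    (hV₀ : 0 < V 0) (hν : ∀ᵐ x ∂ν, |x| ≤ R) :
    Tendsto (fun m ↦ ∫ x, f x * cskKernel V m x ∂ν) (nhds 0) (nhds (∫ x, f x ∂ν)) := by
  have hfi := integrable_of_continuous_of_ae_abs_le hf hν
  have kernel_tendsto (x : ℝ) : Tendsto (fun m ↦ cskKernel V m x) (nhds 0) (nhds 1) := by
    have : ContinuousAt (fun m ↦ V m / (V m + m * (m - x))) 0 :=
      hV.div (by fun_prop) (by simpa using hV₀.ne')
    simpa [ContinuousAt, cskKernel, hV₀.ne'] using this
  refine tendsto_integral_filter_of_dominated_convergence (fun x ↦ ‖f x‖ * 2)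
    (.of_forall fun m ↦ (hf.measurable.mul (measurable_cskKernel V m)).aestronglyMeasurable) ?_
    (hfi.norm.mul_const 2) (.of_forall fun x ↦ by simpa using (kernel_tendsto x).const_mul (f x))
  filter_upwards [eventually_ae_abs_cskKernel_le_two hV hV₀ hν] with m ⟨_, _, hk⟩
  filter_upwards [hk] with x hx
  rw [norm_mul]
  exact mul_le_mul_of_nonneg_left hx (norm_nonneg _)

end KernelExpansion

section VarianceFunctions

open scoped Polynomial

variable {V : ℝ → ℝ} {v : ℝ⟦X⟧} {R : ℝ} {ν : Measure ℝ} [IsFiniteMeasure ν]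

lemma eventually_integral_cskKernel_eq_one_iff (hV : IsTaylorSeries v V)
    (hv : constantCoeff v = 1) (hν : ∀ᵐ x ∂ν, |x| ≤ R) :
    (∀ᶠ m in nhds 0, ∫ x, cskKernel V m x ∂ν = 1) ↔
      ∀ p : ℝ[X], ∫ x, p.eval x ∂ν = kernelFunctional hv p := by
  have expansion := hV.integral_cskKernel hv hν
  refine ⟨fun h ↦ ?_, fun h ↦ ?_⟩
  · have hint (p : ℝ[X]) : Integrable (fun x ↦ p.eval x) ν :=
      integrable_of_continuous_of_ae_abs_le p.continuous hν
    let L : ℝ[X] →ₗ[ℝ] ℝ :=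
      { toFun p := ∫ x, p.eval x ∂ν
        map_add' p q := by simpa only [Polynomial.eval_add] using integral_add (hint p) (hint q)
        map_smul' c p := by
          simpa only [Polynomial.eval_smul, RingHom.id_apply] using integral_smul c _ }
    have moments_eq : PowerSeries.mk (fun k ↦ L (kernelPoly v k)) = 1 :=
      IsTaylorSeries.unique (expansion.and h |>.mono fun m hm ↦ hm.2 ▸ hm.1) isTaylorSeries_one
    have : L = kernelFunctional hv := eq_kernelFunctional hv fun k ↦ by
      simpa only [coeff_mk, coeff_one] using congrArg (coeff k) moments_eq
    exact fun p ↦ LinearMap.congr_fun this p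
  · have moments_eq : PowerSeries.mk (fun k ↦ ∫ x, (kernelPoly v k).eval x ∂ν) = 1 := by
      ext k
      rw [coeff_mk, h, kernelFunctional_kernelPoly, coeff_one]
    rw [moments_eq] at expansion
    filter_upwards [expansion, isTaylorSeries_one] with m hm hm' using hm.unique hm'

lemma apply_zero_eq_integral_sq (hV : IsCSKVarianceFun ν V) (hν : ∀ᵐ x ∂ν, |x| ≤ R)
    (hmean : ∫ x, x ∂ν = 0) : V 0 = ∫ x, x ^ 2 ∂ν := by
  obtain ⟨hanalytic, hV₀, ε, hε, hkernel⟩ := hV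
  have hid := integrable_of_continuous_of_ae_abs_le continuous_id hν
  have second_moment : ∀ᶠ m in nhdsWithin 0 {0}ᶜ,
      ∫ x, x ^ 2 * cskKernel V m x ∂ν = V m + m ^ 2 := by
    filter_upwards [self_mem_nhdsWithin, nhdsWithin_le_nhds (Metric.ball_mem_nhds 0 hε),
      nhdsWithin_le_nhds (eventually_ae_abs_cskKernel_le_two hanalytic.continuousAt hV₀ hν)]
      with m (hm : m ≠ 0) hmε ⟨_, hden, hk⟩
    have := integral_mul_mul_cskKernel (hden.mono fun _ h ↦ h.ne') hm hid
      (integrable_mul_cskKernel hid hk)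
    simp only [id_eq, hmean, (hkernel m (by simpa using hmε)).2.2, ← mul_assoc, ← sq] at this
    rw [this]
    field_simp
    ring
  have hlim : Tendsto (fun m ↦ V m + m ^ 2) (nhdsWithin 0 {0}ᶜ) (nhds (V 0)) := by
    have : ContinuousAt (fun m ↦ V m + m ^ 2) 0 := hanalytic.continuousAt.add (by fun_prop)
    simpa [ContinuousAt] using this.tendsto.mono_left nhdsWithin_le_nhds
  exact tendsto_nhds_unique (hlim.congr' (second_moment.mono fun _ h ↦ h.symm))
    ((tendsto_integral_mul_cskKernel (continuous_pow 2) hanalytic.continuousAt hV₀ hν).mono_left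
      nhdsWithin_le_nhds)

lemma isCSKVarianceFun_of_integral_eval_eq (hV : IsTaylorSeries v V) (hv : constantCoeff v = 1)
    (hν : ∀ᵐ x ∂ν, |x| ≤ R) (h : ∀ p : ℝ[X], ∫ x, p.eval x ∂ν = kernelFunctional hv p) :
    IsCSKVarianceFun ν V := by
  have hV₀ : 0 < V 0 := by
    rw [← hV.constantCoeff_eq, hv]
    exact one_pos
  have mass : ∫ _, (1 : ℝ) ∂ν = 1 := by simpa [kernelFunctional_one] using h 1
  have mean : ∫ x, x ∂ν = 0 := by simpa [kernelFunctional_X] using h Polynomial.X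
  obtain ⟨ε, hε, hball⟩ := Metric.eventually_nhds_iff.1 <|
    ((eventually_integral_cskKernel_eq_one_iff hV hv hν).2 h).and
      (eventually_ae_abs_cskKernel_le_two hV.analyticAt.continuousAt hV₀ hν)
  refine ⟨hV.analyticAt, hV₀, ε, hε, fun m hm ↦ ?_⟩
  obtain ⟨hone, hVm, hden, hk⟩ := hball (y := m) (by simpa [Real.dist_eq] using hm)
  refine ⟨hden.mono fun x hx ↦ (div_pos hVm hx).le, hone, ?_⟩
  rcases eq_or_ne m 0 with rfl | hm₀
  · simpa [cskKernel, hVm.ne'] using mean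
  have := integral_mul_mul_cskKernel (hden.mono fun _ h ↦ h.ne') hm₀ (integrable_const 1)
    (integrable_mul_cskKernel (integrable_const 1) hk)
  simp only [one_mul, mass, hone] at this
  rw [this]
  field_simp
  ring

lemma exists_measure_integral_eval_eq_kernelFunctional (hV : IsTaylorSeries v V)
    (hv : constantCoeff v = 1) (hpos : HasPosSemidefResolvent (hankelKernel v + 1)) :
    ∃ (ν : Measure ℝ) (D : ℝ), ν (Set.Icc (-D) D)ᶜ = 0 ∧
      ∀ p : ℝ[X], ∫ x, p.eval x ∂ν = kernelFunctional hv p := by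
  obtain ⟨B, hB⟩ := hV.exists_eventually_abs_coeff_succ_add_one_le
  obtain ⟨ρ, hρB, hρ, hD⟩ :=
    (hB.and ((eventually_ge_atTop 0).and (eventually_gt_atTop (-(3 * B))))).exists
  obtain ⟨ν, hsupp, hν⟩ := exists_measure_Icc_forall_integral_eq (L := kernelFunctional hv)
    (D := ρ + 3 * B) ((kernelFunctional_mul_self_nonneg_iff hv).2 hpos) (by linarith) fun n ↦ by
      simpa [kernelPoly_zero hv] using abs_kernelFunctional_X_pow_mul_kernelPoly_le hv hρ hρB n 0
  exact ⟨ν, _, hsupp, hν⟩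

end VarianceFunctions

section MemV

variable {V : ℝ → ℝ} {v : ℝ⟦X⟧}

lemma apply_zero_of_memV (h : memV V) : V 0 = 1 := by
  obtain ⟨ν, ⟨_, ⟨R, hR⟩, -, hmean⟩, hvar, hV⟩ := h
  have hν : ∀ᵐ x ∂ν, |x| ≤ R := by
    filter_upwards [mem_ae_iff.2 hR] with x hx using abs_le.2 hx
  rw [apply_zero_eq_integral_sq hV hν hmean, hvar]

lemma hasPosSemidefResolvent_of_memV (hV : IsTaylorSeries v V) (h : memV V) :
    HasPosSemidefResolvent (hankelKernel v + 1) := by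
  have hv : constantCoeff v = 1 := hV.constantCoeff_eq.trans (apply_zero_of_memV h)
  obtain ⟨ν, ⟨_, ⟨R, hR⟩, -, -⟩, -, -, -, ε, hε, hkernel⟩ := h
  have hν : ∀ᵐ x ∂ν, |x| ≤ R := by
    filter_upwards [mem_ae_iff.2 hR] with x hx using abs_le.2 hx
  have integral_eq := (eventually_integral_cskKernel_eq_one_iff hV hv hν).1 <|
    Metric.eventually_nhds_iff.2 ⟨ε, hε, fun m hm ↦ (hkernel m (by simpa using hm)).2.1⟩
  refine (kernelFunctional_mul_self_nonneg_iff hv).1 fun p ↦ ?_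
  rw [← integral_eq]
  exact integral_nonneg fun x ↦ by simpa using mul_self_nonneg (p.eval x)

lemma memV_of_hasPosSemidefResolvent (hV : IsTaylorSeries v V) (hv : constantCoeff v = 1)
    (hpos : HasPosSemidefResolvent (hankelKernel v + 1)) : memV V := by
  obtain ⟨ν, D, hsupp, h⟩ := exists_measure_integral_eval_eq_kernelFunctional hV hv hpos
  have mass : ν.real Set.univ = 1 := by simpa [kernelFunctional_one] using h 1
  have mean : ∫ x, x ∂ν = 0 := by simpa [kernelFunctional_X] using h Polynomial.X
  have variance : ∫ x, x ^ 2 ∂ν = 1 := by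
    simpa using (h (Polynomial.X ^ 2)).trans (kernelFunctional_X_sq hv)
  have hprob : IsProbabilityMeasure ν := isProbabilityMeasure_iff_real.2 mass
  have hν : ∀ᵐ x ∂ν, |x| ≤ D := by
    filter_upwards [mem_ae_iff.2 hsupp] with x hx using abs_le.2 hx
  refine ⟨ν, ⟨hprob, ⟨D, hsupp⟩, ?_, mean⟩, variance,
    isCSKVarianceFun_of_integral_eval_eq hV hv hν h⟩
  rintro a rfl
  rw [integral_dirac] at mean variance
  simp [mean] at variance

lemma memV_iff (hV : IsTaylorSeries v V) :
    memV V ↔ constantCoeff v = 1 ∧ HasPosSemidefResolvent (hankelKernel v + 1) :=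
  ⟨fun h ↦ ⟨hV.constantCoeff_eq.trans (apply_zero_of_memV h), hasPosSemidefResolvent_of_memV hV h⟩,
    fun h ↦ memV_of_hasPosSemidefResolvent hV h.1 h.2⟩

lemma memVinf_iff (hV : IsTaylorSeries v V) :
    memVinf V ↔ constantCoeff v = 1 ∧ HasPosSemidefResolvent (hankelKernel v) := by
  simp only [memVinf, memV_iff (hV.rescale _), forall_and, forall_const,
    hasPosSemidefResolvent_hankelKernel_iff, ← coeff_zero_eq_constantCoeff_apply, coeff_rescale,
    pow_zero, one_mul]

lemma exists_isTaylorSeries_of_memVinf (h : memVinf V) : ∃ v, IsTaylorSeries v V := by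
  obtain ⟨-, -, -, hV, -⟩ := h 1
  simpa only [one_mul] using exists_isTaylorSeries hV

end MemV

end CSK

/-- If `V₁, V₂ ∈ 𝒱∞` then `m ↦ V₁(m) + V₂(m) − 1 ∈ 𝒱∞`. -/
theorem memVinf_add (V₁ V₂ : ℝ → ℝ) (h₁ : memVinf V₁) (h₂ : memVinf V₂) :
    memVinf (fun m => V₁ m + V₂ m - 1) := by
  obtain ⟨v₁, hv₁⟩ := CSK.exists_isTaylorSeries_of_memVinf h₁
  obtain ⟨v₂, hv₂⟩ := CSK.exists_isTaylorSeries_of_memVinf h₂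
  obtain ⟨normalized₁, resolvent₁⟩ := (CSK.memVinf_iff hv₁).1 h₁
  obtain ⟨normalized₂, resolvent₂⟩ := (CSK.memVinf_iff hv₂).1 h₂
  refine (CSK.memVinf_iff ((hv₁.add hv₂).sub CSK.isTaylorSeries_one)).2 ⟨?_, ?_⟩
  · simp [normalized₁, normalized₂]
  · rw [CSK.hankelKernel_sub_one, CSK.hankelKernel_add]
    exact resolvent₁.add resolvent₂
end
end
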